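/- arXiv:2603.21267 — 3 statements merged into one kernel-verified Lean document; each statement's English description precedes it below -/
import Mathlib

section
/- Every generalized geometric Brascamp–Lieb datum (C,p,Q) has regularized Brascamp–Lieb constant BL(C,p,Q) = 1; equivalently, for all nonnegative f_j ∈ L¹(ℝ^{n_j}) with f_j more log-convex than g_{Q_j} (1 ≤ j ≤ m), ∫_{ℝⁿ} ∏_{j=1}^m f_j(C_j x)^{p_j} dx ≤ ∏_{j=1}^m (∫_{ℝ^{n_j}} f_j)^{p_j}, and the constant 1 cannot be improved. -/
open MeasureTheory Matrix
open scoped ENNReal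

noncomputable section

/-- The centered Gaussian function attached to a matrix `Q` : `g_Q(x) = exp(-π⟨Qx,x⟩)`. -/
def gaussFn {k : ℕ} (Q : Matrix (Fin k) (Fin k) ℝ) (x : Fin k → ℝ) : ℝ :=
  Real.exp (-Real.pi * (Q.mulVec x ⬝ᵥ x))

/-- A nonnegative log-convex function. -/
def LogConvexFun {k : ℕ} (h : (Fin k → ℝ) → ℝ) : Prop :=
  (∀ x, 0 ≤ h x) ∧
    ∀ x y : Fin k → ℝ, ∀ a b : ℝ, 0 ≤ a → 0 ≤ b → a + b = 1 →
      h (a • x + b • y) ≤ h x ^ a * h y ^ b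

/-- `f` is more log-convex than `g_Q`, i.e. `f = g_Q · h` with `h` log-convex. -/
def MoreLogConvex {k : ℕ} (f : (Fin k → ℝ) → ℝ) (Q : Matrix (Fin k) (Fin k) ℝ) : Prop :=
  ∃ h : (Fin k → ℝ) → ℝ, LogConvexFun h ∧ f = fun x => gaussFn Q x * h x

/-- The regularized Brascamp–Lieb constant of a datum `(C, p, Q)`. -/
def BLconst {n m : ℕ} {ni : Fin m → ℕ} (C : ∀ i, Matrix (Fin (ni i)) (Fin n) ℝ)
    (p : Fin m → ℝ) (Q : ∀ i, Matrix (Fin (ni i)) (Fin (ni i)) ℝ) : ℝ≥0∞ :=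
  ⨆ (B : ∀ i, Matrix (Fin (ni i)) (Fin (ni i)) ℝ)
    (_ : ∀ i, (B i).PosDef ∧ (Q i - B i).PosSemidef),
    ((∏ i, ENNReal.ofReal ((B i).det) ^ p i) /
        ENNReal.ofReal ((∑ i, p i • ((C i)ᵀ * B i * C i)).det)) ^ ((2 : ℝ)⁻¹)

/-- A generalized geometric Brascamp–Lieb datum. -/
def GeometricDatum {n m : ℕ} {ni : Fin m → ℕ} (C : ∀ j, Matrix (Fin (ni j)) (Fin n) ℝ)
    (p : Fin m → ℝ) (Q : ∀ j, Matrix (Fin (ni j)) (Fin (ni j)) ℝ) : Prop :=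
  (∀ j, ((1 : Matrix (Fin (ni j)) (Fin (ni j)) ℝ) - C j * (C j)ᵀ).PosSemidef) ∧
    (∀ j, (Q j - 1).PosSemidef) ∧
    (∀ j, ((1 : Matrix (Fin (ni j)) (Fin (ni j)) ℝ) - C j * (C j)ᵀ) * (Q j - 1) = 0) ∧
    (∑ j, p j • ((C j)ᵀ * C j) = 1)

/-!
The argument is Borell's stochastic proof with the Brownian motion discretized in time. Let `γ` be
the Gaussian measure with density `g_1`. By the Cameron–Martin translation and Jensen's inequality,
`log (heat_t (exp φ)) (x)` dominates `heat_t φ (x + √t v) - π|v|²` for every drift `v`, and for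
regular `φ` and small `t` a suitable `v` attains it up to `O(t²)`. Apply the second fact to
`x ↦ ∑ p_j φ_j(C_j x)` and the first, with drift `C_j v`, to each `φ_j`: the drift costs cancel
because `∑ p_j |C_j v|² = |v|²`.

Where `C_j C_jᵀ ≠ 1`, the projected heat flow is only part of the heat flow on `ℝ^{n_j}`. The rest
is an average along the image of `D_j`, where `C_j C_jᵀ + D_j D_jᵀ = 1`. After `N` steps of length
`1/N`, as `N → ∞`, this gives, with `φ_j` averaged along `D_j` on the left only,
`∫ exp (∑ p_j φ_j(C_j x)) dγ ≤ ∏ (∫ exp φ_j dγ) ^ p_j`.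
If `f_j = g_{Q_j} h_j = g_1 exp φ_j`, then `φ_j = log h_j - π⟨(Q_j - 1)x, x⟩` is convex along the
image of `D_j`, on which `Q_j - 1` vanishes, so Jensen's inequality removes the average.

Testing the inequality on Gaussians bounds the Brascamp–Lieb constant by `1`, and `B_j = 1`
attains it.
-/

open scoped BoundedContinuousFunction

section GaussianMeasure

variable {ι κ κ' μ μ' : Type*} [Fintype ι] [Fintype κ] [Fintype κ'] [Fintype μ] [Fintype μ']

/-- The Gaussian probability measure on `ℝ^ι` with density `exp(-π|x|²)`: this normalization makes
`g_1` a probability density, at the cost of having covariance `1/(2π)`. -/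
def gaussMeasure (ι : Type*) [Fintype ι] : Measure (ι → ℝ) :=
  volume.withDensity fun x => ENNReal.ofReal (Real.exp (-Real.pi * (x ⬝ᵥ x)))

lemma measurable_exp_neg_pi_mul_dotProduct_self :
    Measurable fun x : ι → ℝ => Real.exp (-Real.pi * (x ⬝ᵥ x)) :=
  Continuous.measurable (by fun_prop)

lemma integral_gaussMeasure {E : Type*} [NormedAddCommGroup E] [NormedSpace ℝ E]
    (f : (ι → ℝ) → E) :
    ∫ x, f x ∂gaussMeasure ι = ∫ x, Real.exp (-Real.pi * (x ⬝ᵥ x)) • f x := by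
  rw [gaussMeasure, integral_withDensity_eq_integral_toReal_smul
    measurable_exp_neg_pi_mul_dotProduct_self.ennreal_ofReal (by simp)]
  simp [Real.exp_nonneg]

lemma integrable_gaussMeasure_iff {E : Type*} [NormedAddCommGroup E] [NormedSpace ℝ E]
    (f : (ι → ℝ) → E) :
    Integrable f (gaussMeasure ι) ↔
      Integrable fun x => Real.exp (-Real.pi * (x ⬝ᵥ x)) • f x := by
  rw [gaussMeasure, integrable_withDensity_iff_integrable_smul'
    measurable_exp_neg_pi_mul_dotProduct_self.ennreal_ofReal (by simp)]
  simp [Real.exp_nonneg]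

lemma lintegral_gaussMeasure {f : (ι → ℝ) → ℝ≥0∞} (hf : Measurable f) :
    ∫⁻ x, f x ∂gaussMeasure ι =
      ∫⁻ x, ENNReal.ofReal (Real.exp (-Real.pi * (x ⬝ᵥ x))) * f x := by
  rw [gaussMeasure, lintegral_withDensity_eq_lintegral_mul _
    measurable_exp_neg_pi_mul_dotProduct_self.ennreal_ofReal hf]
  rfl

lemma integral_cexp_dotProduct_gaussMeasure (a : ι → ℝ) (z : ℂ) :
    ∫ x, Complex.exp (z * ((a ⬝ᵥ x : ℝ) : ℂ)) ∂gaussMeasure ι =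
      Complex.exp (z ^ 2 * ((a ⬝ᵥ a : ℝ) : ℂ) / (4 * Real.pi)) := by
  have h := GaussianFourier.integral_cexp_neg_mul_sum_add (ι := ι) (b := (Real.pi : ℂ))
    (by simpa using Real.pi_pos) (fun i => z * a i)
  rw [div_self (by simp), Complex.one_cpow, one_mul] at h
  rw [integral_gaussMeasure]
  convert h using 2
  · ext x
    rw [Complex.exp_add, Complex.real_smul]
    simp [dotProduct, Finset.mul_sum, mul_assoc, pow_two]
  · simp [dotProduct, Finset.mul_sum, pow_two, mul_mul_mul_comm]

instance isProbabilityMeasure_gaussMeasure : IsProbabilityMeasure (gaussMeasure ι) := by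
  have h : (gaussMeasure ι).real Set.univ = 1 := by
    have h0 := integral_cexp_dotProduct_gaussMeasure (0 : ι → ℝ) 0
    simp only [zero_mul, Complex.exp_zero, integral_const, ne_eq, OfNat.ofNat_ne_zero,
      not_false_eq_true, zero_pow, zero_div, Complex.real_smul, mul_one] at h0
    exact_mod_cast h0
  refine ⟨?_⟩
  rwa [measureReal_def, ENNReal.toReal_eq_one_iff] at h

lemma integral_gaussMeasure_add (f : (ι → ℝ) → ℝ) (v : ι → ℝ) :
    ∫ x, f (x + v) ∂gaussMeasure ι =
      ∫ x, f x * Real.exp (2 * Real.pi * (x ⬝ᵥ v) - Real.pi * (v ⬝ᵥ v)) ∂gaussMeasure ι := by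
  rw [integral_gaussMeasure, integral_gaussMeasure, ← integral_add_right_eq_self
    (fun x => Real.exp (-Real.pi * (x ⬝ᵥ x)) •
      (f x * Real.exp (2 * Real.pi * (x ⬝ᵥ v) - Real.pi * (v ⬝ᵥ v)))) v]
  congr 1
  ext x
  simp only [smul_eq_mul]
  rw [mul_comm (f _), ← mul_assoc, ← Real.exp_add]
  congr 2
  simp only [dotProduct_add, add_dotProduct, dotProduct_comm v x]
  ring

lemma norm_sq_le_dotProduct_self (x : ι → ℝ) : ‖x‖ ^ 2 ≤ x ⬝ᵥ x := by
  have h : ‖x‖ ≤ √(x ⬝ᵥ x) := (pi_norm_le_iff_of_nonneg (Real.sqrt_nonneg _)).2 fun i => by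
    refine Real.abs_le_sqrt ?_
    rw [sq]
    exact Finset.single_le_sum (f := fun i => x i * x i) (fun i _ => mul_self_nonneg _)
      (Finset.mem_univ i)
  have hx : 0 ≤ x ⬝ᵥ x := Finset.sum_nonneg fun i _ => mul_self_nonneg _
  simpa only [Real.sq_sqrt hx] using pow_le_pow_left₀ (norm_nonneg x) h 2

lemma integrable_exp_mul_norm_gaussMeasure (c : ℝ) :
    Integrable (fun x => Real.exp (c * ‖x‖)) (gaussMeasure ι) := by
  have hhalf : Integrable fun x : ι → ℝ => Real.exp (-(Real.pi / 2) * (x ⬝ᵥ x)) := by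
    refine (GaussianFourier.integrable_cexp_neg_mul_sum_add (ι := ι) (b := Real.pi / 2)
      (by simpa using Real.pi_pos) 0).norm.congr (.of_forall fun x => ?_)
    simp only [Complex.norm_exp]
    congr 1
    simp [dotProduct, ← pow_two, ← Complex.ofReal_pow, ← Complex.ofReal_sum]
  rw [integrable_gaussMeasure_iff]
  refine (hhalf.const_mul (Real.exp (c ^ 2 / (2 * Real.pi)))).mono'
    (Continuous.aestronglyMeasurable (by fun_prop)) (.of_forall fun x => ?_)
  rw [smul_eq_mul, ← Real.exp_add, ← Real.exp_add, Real.norm_eq_abs, Real.abs_exp, Real.exp_le_exp]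
  have hsq : 0 ≤ (c - Real.pi * ‖x‖) ^ 2 / (2 * Real.pi) := by positivity
  have hexpand : (c - Real.pi * ‖x‖) ^ 2 / (2 * Real.pi) =
      c ^ 2 / (2 * Real.pi) + Real.pi / 2 * ‖x‖ ^ 2 - c * ‖x‖ := by
    field_simp
    ring
  nlinarith [norm_sq_le_dotProduct_self x, Real.pi_pos]

lemma abs_dotProduct_le (a x : ι → ℝ) : |a ⬝ᵥ x| ≤ (∑ i, |a i|) * ‖x‖ := by
  rw [Finset.sum_mul]
  refine (Finset.abs_sum_le_sum_abs _ _).trans (Finset.sum_le_sum fun i _ => ?_)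
  rw [abs_mul]
  exact mul_le_mul_of_nonneg_left (norm_le_pi_norm x i) (abs_nonneg _)

lemma integrable_dotProduct_gaussMeasure (a : ι → ℝ) :
    Integrable (fun x => a ⬝ᵥ x) (gaussMeasure ι) := by
  refine ((integrable_exp_mul_norm_gaussMeasure 1).const_mul (∑ i, |a i|)).mono'
    (Continuous.aestronglyMeasurable (by fun_prop)) (.of_forall fun x => ?_)
  refine (abs_dotProduct_le a x).trans ?_
  gcongr
  linarith [Real.add_one_le_exp (1 * ‖x‖)]

lemma integral_dotProduct_gaussMeasure (a : ι → ℝ) :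
    ∫ x, a ⬝ᵥ x ∂gaussMeasure ι = 0 := by
  have h := integral_neg_eq_self
    (fun x : ι → ℝ => Real.exp (-Real.pi * (x ⬝ᵥ x)) * (a ⬝ᵥ x)) volume
  simp only [dotProduct_neg, neg_dotProduct, neg_neg, mul_neg, integral_neg] at h
  simp only [integral_gaussMeasure, smul_eq_mul]
  linarith

lemma charFunDual_gaussMeasure {L : StrongDual ℝ (ι → ℝ)} {a : ι → ℝ} (hL : ∀ x, L x = a ⬝ᵥ x) :
    charFunDual (gaussMeasure ι) L = Complex.exp (-((a ⬝ᵥ a : ℝ) : ℂ) / (4 * Real.pi)) := by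
  simpa [charFunDual_apply, hL, mul_comm] using integral_cexp_dotProduct_gaussMeasure a Complex.I

lemma vecMul_dotProduct_vecMul_self (A : Matrix ι κ ℝ) (a : ι → ℝ) :
    (a ᵥ* A) ⬝ᵥ (a ᵥ* A) = (a ᵥ* (A * Aᵀ)) ⬝ᵥ a := by
  rw [← vecMul_vecMul, ← dotProduct_mulVec (a ᵥ* A), mulVec_transpose]

lemma charFunDual_map_mulVec_add_mulVec_gaussMeasure (A : Matrix ι κ ℝ) (B : Matrix ι μ ℝ)
    {L : StrongDual ℝ (ι → ℝ)} {a : ι → ℝ} (hL : ∀ x, L x = a ⬝ᵥ x) :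
    charFunDual (((gaussMeasure κ).prod (gaussMeasure μ)).map
        fun z => A *ᵥ z.1 + B *ᵥ z.2) L =
      Complex.exp (-(((a ᵥ* (A * Aᵀ + B * Bᵀ)) ⬝ᵥ a : ℝ) : ℂ) / (4 * Real.pi)) := by
  let T : ((κ → ℝ) × (μ → ℝ)) →L[ℝ] (ι → ℝ) :=
    (A.mulVecLin.toContinuousLinearMap).coprod (B.mulVecLin.toContinuousLinearMap)
  have hT : (fun z : (κ → ℝ) × (μ → ℝ) => A *ᵥ z.1 + B *ᵥ z.2) = T := by
    ext z; simp [T]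
  rw [hT, charFunDual_map, charFunDual_prod, charFunDual_gaussMeasure (a := a ᵥ* A),
    charFunDual_gaussMeasure (a := a ᵥ* B), ← Complex.exp_add, vecMul_add, add_dotProduct,
    vecMul_dotProduct_vecMul_self, vecMul_dotProduct_vecMul_self]
  · push_cast
    ring_nf
  all_goals
    intro x
    simp [T, hL, dotProduct_mulVec]

theorem map_mulVec_add_mulVec_gaussMeasure_congr {ι : Type*} [Finite ι] {A : Matrix ι κ ℝ}
    {B : Matrix ι μ ℝ} {A' : Matrix ι κ' ℝ} {B' : Matrix ι μ' ℝ}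
    (h : A * Aᵀ + B * Bᵀ = A' * A'ᵀ + B' * B'ᵀ) :
    ((gaussMeasure κ).prod (gaussMeasure μ)).map (fun z => A *ᵥ z.1 + B *ᵥ z.2) =
      ((gaussMeasure κ').prod (gaussMeasure μ')).map (fun z => A' *ᵥ z.1 + B' *ᵥ z.2) := by
  classical
  have := Fintype.ofFinite ι
  have : IsProbabilityMeasure
      (((gaussMeasure κ).prod (gaussMeasure μ)).map fun z => A *ᵥ z.1 + B *ᵥ z.2) :=
    Measure.isProbabilityMeasure_map (by fun_prop)
  have : IsProbabilityMeasure
      (((gaussMeasure κ').prod (gaussMeasure μ')).map fun z => A' *ᵥ z.1 + B' *ᵥ z.2) :=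
    Measure.isProbabilityMeasure_map (by fun_prop)
  refine Measure.ext_of_charFunDual (funext fun L => ?_)
  have hL : ∀ x, L x = (dotProductEquiv ℝ ι).symm L.toLinearMap ⬝ᵥ x := fun x =>
    (LinearMap.congr_fun ((dotProductEquiv ℝ ι).apply_symm_apply L.toLinearMap) x).symm
  rw [charFunDual_map_mulVec_add_mulVec_gaussMeasure A B hL,
    charFunDual_map_mulVec_add_mulVec_gaussMeasure A' B' hL, h]

end GaussianMeasure

section GaussianAverage

lemma integrable_comp_add_mulVec {ι κ : Type*} [Fintype κ] (A : Matrix ι κ ℝ) (φ : (ι → ℝ) →ᵇ ℝ)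
    (x : ι → ℝ) :
    Integrable (fun ξ => φ (x + A *ᵥ ξ)) (gaussMeasure κ) :=
  .of_bound (Continuous.aestronglyMeasurable (by fun_prop)) ‖φ‖
    (.of_forall fun _ => φ.norm_coe_le_norm _)

variable {ι κ κ' μ μ' : Type*} [Finite ι] [Fintype κ] [Fintype κ'] [Fintype μ] [Fintype μ']

/-- The average of `φ` over the Gaussian vector `x + Aξ`, as a function of its mean `x`; the
covariance is `A Aᵀ / 2π`. With `A = √t • 1` this is the heat flow at time `t`. -/
def gaussAverage (A : Matrix ι κ ℝ) (φ : (ι → ℝ) →ᵇ ℝ) : (ι → ℝ) →ᵇ ℝ :=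
  .ofNormedAddCommGroup (fun x => ∫ ξ, φ (x + A *ᵥ ξ) ∂gaussMeasure κ)
    (continuous_of_dominated
      (fun _ => Continuous.aestronglyMeasurable (by fun_prop))
      (fun _ => .of_forall fun _ => φ.norm_coe_le_norm _) (integrable_const ‖φ‖)
      (.of_forall fun _ => by fun_prop))
    ‖φ‖ fun _ => by
      simpa using norm_integral_le_of_norm_le_const (μ := gaussMeasure κ)
        (.of_forall fun _ => φ.norm_coe_le_norm _)

lemma gaussAverage_apply (A : Matrix ι κ ℝ) (φ : (ι → ℝ) →ᵇ ℝ) (x : ι → ℝ) :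
    gaussAverage A φ x = ∫ ξ, φ (x + A *ᵥ ξ) ∂gaussMeasure κ := rfl

lemma gaussAverage_add_le_add (A : Matrix ι κ ℝ) {φ ψ : (ι → ℝ) →ᵇ ℝ} {v : ι → ℝ} {c : ℝ}
    (h : ∀ x, φ (x + v) ≤ ψ x + c) (x : ι → ℝ) :
    gaussAverage A φ (x + v) ≤ gaussAverage A ψ x + c := by
  have hψ := integrable_comp_add_mulVec A ψ x
  rw [gaussAverage_apply, gaussAverage_apply]
  calc ∫ ξ, φ (x + v + A *ᵥ ξ) ∂gaussMeasure κ ≤ ∫ ξ, (ψ (x + A *ᵥ ξ) + c) ∂gaussMeasure κ :=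
        integral_mono (integrable_comp_add_mulVec A φ (x + v)) (hψ.add (integrable_const c))
          fun ξ => by simpa only [add_right_comm x v] using! h (x + A *ᵥ ξ)
    _ = ∫ ξ, ψ (x + A *ᵥ ξ) ∂gaussMeasure κ + c := by
        simp [integral_add hψ (integrable_const c)]

@[simp]
lemma gaussAverage_zero (φ : (ι → ℝ) →ᵇ ℝ) : gaussAverage (0 : Matrix ι κ ℝ) φ = φ := by
  ext x
  simp [gaussAverage_apply]

lemma gaussAverage_gaussAverage_apply (A : Matrix ι κ ℝ) (B : Matrix ι μ ℝ) (φ : (ι → ℝ) →ᵇ ℝ)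
    (x : ι → ℝ) :
    gaussAverage A (gaussAverage B φ) x = ∫ w, φ (x + w)
      ∂((gaussMeasure κ).prod (gaussMeasure μ)).map fun z => A *ᵥ z.1 + B *ᵥ z.2 := by
  rw [integral_map (by fun_prop) (Continuous.aestronglyMeasurable (by fun_prop)),
    integral_prod _ (.of_bound (Continuous.aestronglyMeasurable (by fun_prop)) ‖φ‖
      (.of_forall fun _ => φ.norm_coe_le_norm _))]
  simp only [gaussAverage_apply, add_assoc]

theorem gaussAverage_gaussAverage_congr {A : Matrix ι κ ℝ} {B : Matrix ι μ ℝ}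
    {A' : Matrix ι κ' ℝ} {B' : Matrix ι μ' ℝ} (h : A * Aᵀ + B * Bᵀ = A' * A'ᵀ + B' * B'ᵀ)
    (φ : (ι → ℝ) →ᵇ ℝ) :
    gaussAverage A (gaussAverage B φ) = gaussAverage A' (gaussAverage B' φ) := by
  ext x
  rw [gaussAverage_gaussAverage_apply, gaussAverage_gaussAverage_apply,
    map_mulVec_add_mulVec_gaussMeasure_congr h]

/-- The bounded continuous function `exp ∘ φ`. -/
def expBounded {α : Type*} [TopologicalSpace α] (φ : α →ᵇ ℝ) : α →ᵇ ℝ :=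
  .ofNormedAddCommGroup (fun x => Real.exp (φ x)) (by fun_prop) (Real.exp ‖φ‖) fun x => by
    simpa [Real.norm_eq_abs] using (le_abs_self _).trans (φ.norm_coe_le_norm x)

@[simp]
lemma expBounded_apply {α : Type*} [TopologicalSpace α] (φ : α →ᵇ ℝ) (x : α) :
    expBounded φ x = Real.exp (φ x) := rfl

lemma gaussAverage_expBounded_mem_Icc (A : Matrix ι κ ℝ)
    (φ : (ι → ℝ) →ᵇ ℝ) (x : ι → ℝ) :
    gaussAverage A (expBounded φ) x ∈ Set.Icc (Real.exp (-‖φ‖)) (Real.exp ‖φ‖) := by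
  have hint := integrable_comp_add_mulVec A (expBounded φ) x
  constructor
  · simpa [gaussAverage_apply] using
      integral_mono (integrable_const (Real.exp (-‖φ‖))) hint fun ξ =>
        Real.exp_le_exp.2 (abs_le.1 (φ.norm_coe_le_norm _)).1
  · simpa [gaussAverage_apply] using integral_mono hint (integrable_const (Real.exp ‖φ‖)) fun ξ =>
      Real.exp_le_exp.2 (abs_le.1 (φ.norm_coe_le_norm _)).2

lemma gaussAverage_expBounded_pos (A : Matrix ι κ ℝ)
    (φ : (ι → ℝ) →ᵇ ℝ) (x : ι → ℝ) : 0 < gaussAverage A (expBounded φ) x :=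
  (Real.exp_pos _).trans_le (gaussAverage_expBounded_mem_Icc A φ x).1

end GaussianAverage

section LogHeat

variable {ι : Type*} [Fintype ι] [DecidableEq ι]

/-- The heat flow on logarithms, `log (heat_t (exp φ))`. -/
def logHeat (t : ℝ) (φ : (ι → ℝ) →ᵇ ℝ) : (ι → ℝ) →ᵇ ℝ :=
  .ofNormedAddCommGroup (fun x => Real.log (gaussAverage (√t • 1 : Matrix ι ι ℝ) (expBounded φ) x))
    ((gaussAverage _ _).continuous.log fun x => (gaussAverage_expBounded_pos _ φ x).ne') ‖φ‖
    fun x => by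
      obtain ⟨hlb, hub⟩ := gaussAverage_expBounded_mem_Icc (√t • 1 : Matrix ι ι ℝ) φ x
      have hpos := gaussAverage_expBounded_pos (√t • 1 : Matrix ι ι ℝ) φ x
      rw [Real.norm_eq_abs, abs_le]
      exact ⟨(Real.le_log_iff_exp_le hpos).2 hlb, (Real.log_le_iff_le_exp hpos).2 hub⟩

lemma exp_logHeat (t : ℝ) (φ : (ι → ℝ) →ᵇ ℝ) (x : ι → ℝ) :
    Real.exp (logHeat t φ x) = gaussAverage (√t • 1 : Matrix ι ι ℝ) (expBounded φ) x :=
  Real.exp_log (gaussAverage_expBounded_pos _ φ x)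

lemma exp_logHeat_one_zero (φ : (ι → ℝ) →ᵇ ℝ) :
    Real.exp (logHeat 1 φ 0) = ∫ ξ, Real.exp (φ ξ) ∂gaussMeasure ι := by
  simp [exp_logHeat, gaussAverage_apply]

lemma logHeat_apply (t : ℝ) (φ : (ι → ℝ) →ᵇ ℝ) (x : ι → ℝ) :
    logHeat t φ x = Real.log (∫ ξ, Real.exp (φ (x + √t • ξ)) ∂gaussMeasure ι) := by
  simp [logHeat, gaussAverage_apply, smul_mulVec]

@[simp]
lemma logHeat_zero (φ : (ι → ℝ) →ᵇ ℝ) : logHeat 0 φ = φ := by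
  ext x
  simp [logHeat_apply]

lemma logHeat_logHeat {s t : ℝ} (hs : 0 ≤ s) (ht : 0 ≤ t) (φ : (ι → ℝ) →ᵇ ℝ) :
    logHeat t (logHeat s φ) = logHeat (s + t) φ := by
  have hexp : expBounded (logHeat s φ) = gaussAverage (√s • 1 : Matrix ι ι ℝ) (expBounded φ) := by
    ext x
    exact exp_logHeat s φ x
  have hcov : (√t • 1 : Matrix ι ι ℝ) * (√t • 1)ᵀ + (√s • 1) * (√s • 1)ᵀ =
      (√(s + t) • 1) * (√(s + t) • 1)ᵀ + (0 : Matrix ι ι ℝ) * 0ᵀ := by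
    simp [smul_smul, ← add_smul, Real.mul_self_sqrt, hs, ht, add_nonneg, add_comm]
  ext x
  rw [← Real.exp_eq_exp, exp_logHeat, exp_logHeat, hexp, gaussAverage_gaussAverage_congr hcov,
    gaussAverage_zero]

end LogHeat

section Drift

variable {ι : Type*} [Fintype ι]

/-- The logarithm of the integrand of `∫ exp (φ (x + √t ξ)) dγ(ξ)` after the Cameron–Martin
translation `ξ ↦ ξ + v`. -/
def translatedLog (t : ℝ) (φ : (ι → ℝ) →ᵇ ℝ) (x v ξ : ι → ℝ) : ℝ :=
  φ (x + √t • (ξ + v)) - 2 * Real.pi * (v ⬝ᵥ ξ) - Real.pi * (v ⬝ᵥ v)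

lemma translatedLog_sub (t : ℝ) (φ : (ι → ℝ) →ᵇ ℝ) (x v ξ : ι → ℝ) :
    translatedLog t φ x v ξ - (φ x + Real.pi * (v ⬝ᵥ v)) =
      φ (x + √t • (ξ + v)) - φ x - 2 * Real.pi * (v ⬝ᵥ (ξ + v)) := by
  rw [translatedLog, dotProduct_add]
  ring

lemma integrable_translatedLog (t : ℝ) (φ : (ι → ℝ) →ᵇ ℝ) (x v : ι → ℝ) :
    Integrable (translatedLog t φ x v) (gaussMeasure ι) :=
  ((Integrable.of_bound (Continuous.aestronglyMeasurable (by fun_prop)) ‖φ‖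
    (.of_forall fun _ => φ.norm_coe_le_norm _)).sub
      ((integrable_dotProduct_gaussMeasure v).const_mul _)).sub (integrable_const _)

lemma continuous_translatedLog (t : ℝ) (φ : (ι → ℝ) →ᵇ ℝ) (x v : ι → ℝ) :
    Continuous (translatedLog t φ x v) := by
  unfold translatedLog
  fun_prop

lemma integrable_exp_translatedLog (t : ℝ) (φ : (ι → ℝ) →ᵇ ℝ) (x v : ι → ℝ) :
    Integrable (fun ξ => Real.exp (translatedLog t φ x v ξ)) (gaussMeasure ι) := by
  refine ((integrable_exp_mul_norm_gaussMeasure (2 * Real.pi * ∑ i, |v i|)).const_mul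
    (Real.exp (‖φ‖ - Real.pi * (v ⬝ᵥ v)))).mono'
    (continuous_translatedLog t φ x v).rexp.aestronglyMeasurable (.of_forall fun ξ => ?_)
  rw [Real.norm_eq_abs, Real.abs_exp, ← Real.exp_add, Real.exp_le_exp, translatedLog]
  have hφ := (abs_le.1 (φ.norm_coe_le_norm (x + √t • (ξ + v)))).2
  have hv := (abs_le.1 (abs_dotProduct_le v ξ)).1
  nlinarith [Real.pi_pos]

variable [DecidableEq ι]

lemma integral_translatedLog (t : ℝ) (φ : (ι → ℝ) →ᵇ ℝ) (x v : ι → ℝ) :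
    ∫ ξ, translatedLog t φ x v ξ ∂gaussMeasure ι =
      gaussAverage (√t • 1 : Matrix ι ι ℝ) φ (x + √t • v) - Real.pi * (v ⬝ᵥ v) := by
  have hφ : Integrable (fun ξ => φ (x + √t • (ξ + v))) (gaussMeasure ι) :=
    .of_bound (Continuous.aestronglyMeasurable (by fun_prop)) ‖φ‖
      (.of_forall fun _ => φ.norm_coe_le_norm _)
  have hv : Integrable (fun ξ => 2 * Real.pi * (v ⬝ᵥ ξ)) (gaussMeasure ι) :=
    (integrable_dotProduct_gaussMeasure v).const_mul _
  simp only [translatedLog]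
  rw [integral_sub (by exact hφ.sub hv) (integrable_const _), integral_sub hφ hv,
    integral_const_mul, integral_dotProduct_gaussMeasure]
  simp [gaussAverage_apply, smul_mulVec, add_assoc, add_comm (√t • v)]

lemma integral_exp_translatedLog (t : ℝ) (φ : (ι → ℝ) →ᵇ ℝ) (x v : ι → ℝ) :
    ∫ ξ, Real.exp (translatedLog t φ x v ξ) ∂gaussMeasure ι = Real.exp (logHeat t φ x) := by
  have h := integral_gaussMeasure_add (fun ξ => Real.exp (φ (x + √t • ξ) -
    (2 * Real.pi * (ξ ⬝ᵥ v) - Real.pi * (v ⬝ᵥ v)))) v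
  simp only [← Real.exp_add, sub_add_cancel] at h
  simp only [exp_logHeat, gaussAverage_apply, expBounded_apply, smul_mulVec, one_mulVec, ← h]
  congr 1 with ξ
  rw [translatedLog, add_dotProduct, dotProduct_comm ξ v]
  ring_nf

theorem gaussAverage_le_logHeat_add (t : ℝ) (φ : (ι → ℝ) →ᵇ ℝ) (x v : ι → ℝ) :
    gaussAverage (√t • 1 : Matrix ι ι ℝ) φ (x + √t • v) ≤
      logHeat t φ x + Real.pi * (v ⬝ᵥ v) := by
  rw [← sub_le_iff_le_add, ← integral_translatedLog, ← Real.exp_le_exp,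
    ← integral_exp_translatedLog t φ x v]
  exact convexOn_exp.map_integral_le Real.continuous_exp.continuousOn isClosed_univ
    (.of_forall fun _ => Set.mem_univ _) (integrable_translatedLog t φ x v)
    (integrable_exp_translatedLog t φ x v)

end Drift

lemma exp_le_one_add_add_sq_mul_exp_abs (r : ℝ) :
    Real.exp r ≤ 1 + r + r ^ 2 * Real.exp |r| := by
  have h := Complex.norm_exp_sub_sum_le_norm_mul_exp (r : ℂ) 2
  have hcast : Complex.exp r - ∑ k ∈ Finset.range 2, (r : ℂ) ^ k / k.factorial =
      ((Real.exp r - (1 + r) : ℝ) : ℂ) := by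
    simp [Finset.sum_range_succ]
  rw [hcast, Complex.norm_real, Complex.norm_real, Real.norm_eq_abs, Real.norm_eq_abs, sq_abs] at h
  linarith [le_abs_self (Real.exp r - (1 + r))]

lemma log_integral_exp_le {α : Type*} {_ : MeasurableSpace α} {μ : Measure α}
    [IsProbabilityMeasure μ] {f g : α → ℝ} (c : ℝ) (hf : Integrable f μ)
    (hexp : Integrable (fun x => Real.exp (f x)) μ) (hg : Integrable g μ)
    (hfg : ∀ x, (f x - c) ^ 2 * Real.exp |f x - c| ≤ g x) :
    Real.log (∫ x, Real.exp (f x) ∂μ) ≤ ∫ x, f x ∂μ + ∫ x, g x ∂μ := by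
  have hfactor : ∫ x, Real.exp (f x) ∂μ = Real.exp c * ∫ x, Real.exp (f x - c) ∂μ := by
    simp_rw [← integral_const_mul, ← Real.exp_add, add_sub_cancel]
  have hexp' : Integrable (fun x => Real.exp (f x - c)) μ := by
    simpa only [Real.exp_sub] using hexp.div_const _
  have hpos : 0 < ∫ x, Real.exp (f x - c) ∂μ := integral_exp_pos hexp'
  calc Real.log (∫ x, Real.exp (f x) ∂μ)
      = c + Real.log (∫ x, Real.exp (f x - c) ∂μ) := by
        rw [hfactor, Real.log_mul (Real.exp_pos c).ne' hpos.ne', Real.log_exp]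
    _ ≤ c + (∫ x, Real.exp (f x - c) ∂μ - 1) := by gcongr; exact Real.log_le_sub_one_of_pos hpos
    _ ≤ c + (∫ x, (1 + (f x - c) + g x) ∂μ - 1) := by
        gcongr c + (?_ - _)
        exact integral_mono hexp' (((integrable_const 1).add (hf.sub (integrable_const c))).add hg)
          fun x => (exp_le_one_add_add_sq_mul_exp_abs _).trans (add_le_add le_rfl (hfg x))
    _ = ∫ x, f x ∂μ + ∫ x, g x ∂μ := by
        have hsub : Integrable (fun x => f x - c) μ := hf.sub (integrable_const c)
        rw [integral_add (by exact (integrable_const 1).add hsub) hg,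
          integral_add (integrable_const 1) hsub, integral_sub hf (integrable_const c)]
        simp only [integral_const, probReal_univ, smul_eq_mul, one_mul]
        ring

section TaylorBound

variable {ι : Type*} [Fintype ι]

/-- `F` is `L`-Lipschitz and, at every point `x`, differs from its linearization of slope `a x` by
at most `K‖y‖²`. This quantitative form of `C²` regularity passes to `logHeat s F` with constants
independent of `s`. -/
def TaylorBound (L K : ℝ) (F : (ι → ℝ) → ℝ) (a : (ι → ℝ) → ι → ℝ) : Prop :=
  ∀ x y, |F (x + y) - F x| ≤ L * ‖y‖ ∧ |a x ⬝ᵥ y| ≤ L * ‖y‖ ∧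
    |F (x + y) - F x - a x ⬝ᵥ y| ≤ K * ‖y‖ ^ 2

lemma norm_le_of_forall_abs_dotProduct_le {a : ι → ℝ} {L : ℝ} (hL : 0 ≤ L)
    (h : ∀ y, |a ⬝ᵥ y| ≤ L * ‖y‖) : ‖a‖ ≤ L := by
  classical
  exact (pi_norm_le_iff_of_nonneg hL).2 fun i => by
    simpa [Pi.norm_single] using h (Pi.single i 1)

lemma sq_mul_exp_abs_le {r K L s t : ℝ} (hs : 0 ≤ s) (hr : |r| ≤ K * (t * s ^ 2))
    (hr' : |r| ≤ 2 * L * s) :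
    r ^ 2 * Real.exp |r| ≤ 24 * K ^ 2 * t ^ 2 * Real.exp ((2 * L + 1) * s) := by
  have hs4 : s ^ 4 ≤ 24 * Real.exp s := by
    have := Real.pow_div_factorial_le_exp s hs 4
    rw [div_le_iff₀ (by positivity)] at this
    simpa [Nat.factorial, mul_comm] using this
  calc r ^ 2 * Real.exp |r| ≤ (K * (t * s ^ 2)) ^ 2 * Real.exp (2 * L * s) := by
        rw [← sq_abs r]
        gcongr
    _ = K ^ 2 * t ^ 2 * s ^ 4 * Real.exp (2 * L * s) := by ring
    _ ≤ K ^ 2 * t ^ 2 * (24 * Real.exp s) * Real.exp (2 * L * s) := by gcongr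
    _ = 24 * K ^ 2 * t ^ 2 * Real.exp ((2 * L + 1) * s) := by
        rw [add_mul, one_mul, Real.exp_add]
        ring

variable [DecidableEq ι]

/-- The optimal drift is, to leading order, `√t ∇F(x) / 2π`. -/
theorem exists_logHeat_le_gaussAverage_sub {L : ℝ} (hL : 0 ≤ L) (K : ℝ) :
    ∃ B, ∀ (F : (ι → ℝ) →ᵇ ℝ) a, TaylorBound L K F a → ∀ t ∈ Set.Icc (0 : ℝ) 1, ∀ x, ∃ v,
      logHeat t F x ≤
        gaussAverage (√t • 1 : Matrix ι ι ℝ) F (x + √t • v) - Real.pi * (v ⬝ᵥ v) + B * t ^ 2 := by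
  refine ⟨24 * K ^ 2 * Real.exp ((2 * L + 1) * L) *
    ∫ ξ : ι → ℝ, Real.exp ((2 * L + 1) * ‖ξ‖) ∂gaussMeasure ι, fun F a hF t ht x => ?_⟩
  have hsqrt : √t ≤ 1 := by simpa using ht.2
  set v : ι → ℝ := (√t / (2 * Real.pi)) • a x with hv
  have hvL : ‖v‖ ≤ L := by
    rw [hv, norm_smul, Real.norm_of_nonneg (by positivity)]
    refine (mul_le_of_le_one_left (norm_nonneg (a x)) ?_).trans
      (norm_le_of_forall_abs_dotProduct_le hL fun y => (hF x y).2.1)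
    rw [div_le_one (by positivity)]
    linarith [Real.two_le_pi]
  have hremainder (ξ : ι → ℝ) : translatedLog t F x v ξ - (F x + Real.pi * (v ⬝ᵥ v)) =
      F (x + √t • (ξ + v)) - F x - a x ⬝ᵥ (√t • (ξ + v)) := by
    rw [translatedLog_sub, hv, smul_dotProduct, dotProduct_smul, smul_eq_mul, smul_eq_mul]
    field_simp
  refine ⟨v, ?_⟩
  rw [← integral_translatedLog, ← Real.log_exp (logHeat t F x),
    ← integral_exp_translatedLog t F x v]
  convert log_integral_exp_le (F x + Real.pi * (v ⬝ᵥ v)) (integrable_translatedLog t F x v)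
    (integrable_exp_translatedLog t F x v)
    ((integrable_exp_mul_norm_gaussMeasure (2 * L + 1)).const_mul
      (24 * K ^ 2 * t ^ 2 * Real.exp ((2 * L + 1) * L))) fun ξ => ?_ using 2
  · rw [integral_const_mul]
    ring
  rw [hremainder]
  have hnorm : ‖√t • (ξ + v)‖ = √t * ‖ξ + v‖ := by
    rw [norm_smul, Real.norm_of_nonneg (Real.sqrt_nonneg t)]
  obtain ⟨hlip, hlin, htaylor⟩ := hF x (√t • (ξ + v))
  rw [hnorm] at hlip hlin htaylor
  rw [mul_pow, Real.sq_sqrt ht.1] at htaylor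
  refine (sq_mul_exp_abs_le (norm_nonneg (ξ + v)) htaylor (L := L) ?_).trans ?_
  · have : L * (√t * ‖ξ + v‖) ≤ L * ‖ξ + v‖ := by
      gcongr
      exact mul_le_of_le_one_left (norm_nonneg _) hsqrt
    linarith [abs_sub (F (x + √t • (ξ + v)) - F x) (a x ⬝ᵥ (√t • (ξ + v)))]
  · rw [mul_assoc _ (Real.exp _), ← Real.exp_add, ← mul_add]
    gcongr
    linarith [norm_add_le ξ v]

end TaylorBound

section LogHeatTaylorBound

variable {ι κ : Type*} [Fintype ι] [Fintype κ]

lemma exists_taylorBound_of_contDiff {F : (ι → ℝ) → ℝ} (hF : ContDiff ℝ 2 F)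
    (hsupp : HasCompactSupport (fderiv ℝ F)) :
    ∃ L K a, 0 ≤ L ∧ Continuous a ∧ TaylorBound L K F a := by
  classical
  have hF' : ContDiff ℝ 1 (fderiv ℝ F) := hF.fderiv_right (by norm_num)
  obtain ⟨L, hL⟩ := hsupp.exists_bound_of_continuous hF'.continuous
  obtain ⟨K, hK⟩ := hF'.lipschitzWith_of_hasCompactSupport hsupp one_ne_zero
  have hdiff (x : ι → ℝ) : DifferentiableAt ℝ F x := hF.differentiable (by norm_num) x
  have hdual (x y : ι → ℝ) : (fun i => fderiv ℝ F x (Pi.single i 1)) ⬝ᵥ y = fderiv ℝ F x y := by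
    conv_rhs => rw [← Finset.univ_sum_single y, map_sum]
    refine Finset.sum_congr rfl fun i _ => ?_
    rw [← mul_one (y i), ← smul_eq_mul (y i), Pi.single_smul, map_smul]
    simp [mul_comm]
  refine ⟨L, K, fun x i => fderiv ℝ F x (Pi.single i 1), (norm_nonneg _).trans (hL 0),
    continuous_pi fun i => hF'.continuous.clm_apply continuous_const, fun x y => ⟨?_, ?_, ?_⟩⟩
  · simpa using convex_univ.norm_image_sub_le_of_norm_fderiv_le (fun z _ => hdiff z)
      (fun z _ => hL z) (Set.mem_univ x) (Set.mem_univ (x + y))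
  · rw [hdual]
    exact (fderiv ℝ F x).le_of_opNorm_le (hL x) y
  · have h := (convex_closedBall x ‖y‖).norm_image_sub_le_of_norm_fderiv_le' (𝕜 := ℝ)
      (φ := fderiv ℝ F x) (C := K * ‖y‖) (fun z _ => hdiff z)
      (fun z hz => (hK.norm_sub_le z x).trans (by gcongr; simpa [dist_eq_norm] using hz))
      (Metric.mem_closedBall_self (norm_nonneg y)) (y := x + y) (by simp)
    rw [hdual]
    simpa [sq, mul_assoc] using h

lemma log_sub_log_le_sub_div {r s : ℝ} (hr : 0 < r) (hs : 0 < s) :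
    Real.log s - Real.log r ≤ (s - r) / r := by
  rw [← Real.log_div hs.ne' hr.ne', sub_div, div_self hr.ne']
  exact Real.log_le_sub_one_of_pos (div_pos hs hr)

namespace TaylorBound

variable {L K : ℝ} {a : (ι → ℝ) → ι → ℝ}

lemma gaussAverage {G : (ι → ℝ) →ᵇ ℝ} (A : Matrix ι κ ℝ) (hL : 0 ≤ L) (ha : Continuous a)
    (h : TaylorBound L K G a) :
    TaylorBound L K (gaussAverage A G) fun x i => ∫ ξ, a (x + A *ᵥ ξ) i ∂gaussMeasure κ := by
  intro x y
  have hnorm (z : ι → ℝ) : ‖a z‖ ≤ L := norm_le_of_forall_abs_dotProduct_le hL fun y => (h z y).2.1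
  have hai (i : ι) : Integrable (fun ξ => a (x + A *ᵥ ξ) i) (gaussMeasure κ) :=
    .of_bound (Continuous.aestronglyMeasurable (by fun_prop)) L
      (.of_forall fun _ => (norm_le_pi_norm _ i).trans (hnorm _))
  have hdot : Integrable (fun ξ => a (x + A *ᵥ ξ) ⬝ᵥ y) (gaussMeasure κ) :=
    integrable_finsetSum _ fun i _ => (hai i).mul_const (y i)
  have hslope : (fun i => ∫ ξ, a (x + A *ᵥ ξ) i ∂gaussMeasure κ) ⬝ᵥ y =
      ∫ ξ, a (x + A *ᵥ ξ) ⬝ᵥ y ∂gaussMeasure κ := by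
    simp_rw [dotProduct]
    rw [integral_finsetSum _ fun i _ => (hai i).mul_const (y i)]
    simp_rw [integral_mul_const]
  have hG (z : ι → ℝ) := integrable_comp_add_mulVec A G z
  have hincr : _root_.gaussAverage A G (x + y) - _root_.gaussAverage A G x =
      ∫ ξ, (G (x + A *ᵥ ξ + y) - G (x + A *ᵥ ξ)) ∂gaussMeasure κ := by
    simp_rw [gaussAverage_apply, add_right_comm x y]
    exact (integral_sub (by simpa only [add_right_comm x y] using hG (x + y)) (hG x)).symm
  have hbound {f : (κ → ℝ) → ℝ} {c : ℝ} (hf : ∀ ξ, |f ξ| ≤ c) :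
      |∫ ξ, f ξ ∂gaussMeasure κ| ≤ c := by
    simpa using norm_integral_le_of_norm_le_const (μ := gaussMeasure κ) (f := f) (.of_forall hf)
  rw [hincr, hslope, ← integral_sub _ hdot]
  · exact ⟨hbound fun ξ => (h _ y).1, hbound fun ξ => (h _ y).2.1, hbound fun ξ => (h _ y).2.2⟩
  · exact .sub (by simpa only [add_right_comm x y] using hG (x + y)) (hG x)

lemma log {q : (ι → ℝ) → ℝ} {m : ℝ} (hm : 0 < m) (hq : ∀ x, m ≤ q x)
    (h : TaylorBound L K q a) :
    TaylorBound (L / m) (K / m + (L / m) ^ 2) (fun x => Real.log (q x))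
      fun x => (q x)⁻¹ • a x := by
  intro x y
  obtain ⟨hlip, hlin, htaylor⟩ := h x y
  have hpos (z : ι → ℝ) : 0 < q z := hm.trans_le (hq z)
  set Δ := q (x + y) - q x with hΔ
  have hdiv {r c : ℝ} (z : ι → ℝ) (hr : |r| ≤ c) : |r / q z| ≤ c / m := by
    rw [abs_div, abs_of_pos (hpos z)]
    exact div_le_div₀ ((abs_nonneg r).trans hr) hr hm (hq z)
  have hupper : Real.log (q (x + y)) - Real.log (q x) ≤ Δ / q x :=
    log_sub_log_le_sub_div (hpos _) (hpos _)
  have hlower : Δ / q (x + y) ≤ Real.log (q (x + y)) - Real.log (q x) := by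
    rw [hΔ, ← neg_sub, neg_div, neg_le, neg_sub]
    exact log_sub_log_le_sub_div (hpos _) (hpos _)
  have hgap : Δ / q x - Δ / q (x + y) ≤ (L / m) ^ 2 * ‖y‖ ^ 2 := by
    calc Δ / q x - Δ / q (x + y) = Δ / q x * (Δ / q (x + y)) := by
          have := (hpos x).ne'
          have := (hpos (x + y)).ne'
          field_simp
          ring
      _ ≤ |Δ / q x| * |Δ / q (x + y)| := by rw [← abs_mul]; exact le_abs_self _
      _ ≤ L * ‖y‖ / m * (L * ‖y‖ / m) :=
          mul_le_mul (hdiv x hlip) (hdiv _ hlip) (abs_nonneg _) ((abs_nonneg _).trans (hdiv x hlip))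
      _ = (L / m) ^ 2 * ‖y‖ ^ 2 := by ring
  have hx := abs_le.1 (hdiv x hlip)
  have hxy := abs_le.1 (hdiv (x + y) hlip)
  have hr := abs_le.1 (hdiv x htaylor)
  have hslope : ((q x)⁻¹ • a x) ⬝ᵥ y = a x ⬝ᵥ y / q x := by
    rw [smul_dotProduct, smul_eq_mul, inv_mul_eq_div]
  rw [sub_div] at hr
  rw [hslope, div_mul_eq_mul_div, add_mul, div_mul_eq_mul_div]
  refine ⟨abs_le.2 ⟨hxy.1.trans hlower, hupper.trans hx.2⟩, hdiv x hlin, abs_le.2 ⟨?_, ?_⟩⟩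
  · linarith [hr.1]
  · linarith [hr.2, mul_nonneg (sq_nonneg (L / m)) (sq_nonneg ‖y‖)]

end TaylorBound

theorem exists_taylorBound_logHeat [DecidableEq ι] {ψ : (ι → ℝ) →ᵇ ℝ} (hψ : ContDiff ℝ 2 ψ)
    (hsupp : HasCompactSupport (fderiv ℝ ψ)) :
    ∃ L K, 0 ≤ L ∧ ∀ s, ∃ a, TaylorBound L K (logHeat s ψ) a := by
  have hcoe : ⇑(expBounded ψ) = fun x => Real.exp (ψ x) := rfl
  obtain ⟨L, K, a, hL, ha, h⟩ := exists_taylorBound_of_contDiff (F := expBounded ψ)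
    (by rw [hcoe]; exact hψ.exp) (by
      have hderiv : fderiv ℝ (fun x => Real.exp (ψ x)) = fun x => Real.exp (ψ x) • fderiv ℝ ψ x :=
        funext fun x => _root_.fderiv_exp (hψ.differentiable (by norm_num) x)
      rw [hcoe, hderiv]
      exact hsupp.smul_left (f := fun x => Real.exp (ψ x)))
  exact ⟨_, _, div_nonneg hL (Real.exp_nonneg (-‖ψ‖)), fun s =>
    ⟨_, (h.gaussAverage (√s • 1 : Matrix ι ι ℝ) hL ha).log (Real.exp_pos (-‖ψ‖)) fun x =>
      (gaussAverage_expBounded_mem_Icc _ ψ x).1⟩⟩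

end LogHeatTaylorBound

section PullbackSum

variable {ι J : Type*} [Fintype ι] [Fintype J] {κ : J → Type*}
  (C : ∀ j, Matrix (κ j) ι ℝ) (p : J → ℝ)

/-- The function `x ↦ ∑ j, p j * φ j (C j x)`: the logarithm of the Brascamp–Lieb integrand of the
functions `exp (φ j)`. -/
def pullbackSum (φ : ∀ j, (κ j → ℝ) →ᵇ ℝ) : (ι → ℝ) →ᵇ ℝ :=
  ∑ j, p j • (φ j).compContinuous ⟨fun x => C j *ᵥ x, by fun_prop⟩

lemma pullbackSum_apply (φ : ∀ j, (κ j → ℝ) →ᵇ ℝ) (x : ι → ℝ) :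
    pullbackSum C p φ x = ∑ j, p j * φ j (C j *ᵥ x) := by
  simp [pullbackSum]

lemma gaussAverage_pullbackSum [∀ j, Finite (κ j)] {μ : Type*} [Fintype μ] (A : Matrix ι μ ℝ)
    (φ : ∀ j, (κ j → ℝ) →ᵇ ℝ) :
    gaussAverage A (pullbackSum C p φ) =
      pullbackSum C p fun j => gaussAverage (C j * A) (φ j) := by
  ext x
  simp only [gaussAverage_apply, pullbackSum_apply, mulVec_add, mulVec_mulVec]
  rw [integral_finsetSum _ fun j _ => (integrable_comp_add_mulVec _ (φ j) _).const_mul (p j)]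
  simp_rw [integral_const_mul]

variable {C p}

lemma sum_mul_dotProduct_mulVec_self [DecidableEq ι] [∀ j, Fintype (κ j)]
    (hC : ∑ j, p j • ((C j)ᵀ * C j) = 1) (v : ι → ℝ) :
    ∑ j, p j * (C j *ᵥ v ⬝ᵥ C j *ᵥ v) = v ⬝ᵥ v := by
  have h (j : J) : p j * (C j *ᵥ v ⬝ᵥ C j *ᵥ v) = v ⬝ᵥ (p j • ((C j)ᵀ * C j)) *ᵥ v := by
    rw [smul_mulVec, dotProduct_smul, ← mulVec_mulVec, dotProduct_mulVec v, vecMul_transpose,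
      smul_eq_mul]
  simp_rw [h]
  rw [← dotProduct_sum, ← sum_mulVec, hC, one_mulVec]

end PullbackSum

section Interpolation

variable {ι J : Type*} [Fintype ι] [DecidableEq ι] [Fintype J] {κ δ : J → Type*}
  [∀ j, Fintype (κ j)] [∀ j, DecidableEq (κ j)] [∀ j, Fintype (δ j)]
  {C : ∀ j, Matrix (κ j) ι ℝ} {p : J → ℝ} {D : ∀ j, Matrix (κ j) (δ j) ℝ}

variable (C p D) in
/-- The interpolation, for `0 ≤ s ≤ 1`, between `∑ j, p j * φ j (C j x)`, with `φ j` averaged in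
the directions `D j`, and the sum of the heat flows at time `1`. -/
def interpolant (φ : ∀ j, (κ j → ℝ) →ᵇ ℝ) (s : ℝ) : (ι → ℝ) →ᵇ ℝ :=
  pullbackSum C p fun j => gaussAverage (√(1 - s) • D j) (logHeat s (φ j))

/-- As `C Cᵀ + D Dᵀ = 1`, the amount `t` of averaging in the directions `C` completes the same
amount of averaging in the directions `D` to a full heat flow. -/
lemma gaussAverage_interpolant (hD : ∀ j, C j * (C j)ᵀ + D j * (D j)ᵀ = 1)
    (φ : ∀ j, (κ j → ℝ) →ᵇ ℝ) {s t : ℝ} (ht : 0 ≤ t) (hst : s + t ≤ 1) :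
    gaussAverage (√t • 1 : Matrix ι ι ℝ) (interpolant C p D φ s) = pullbackSum C p fun j =>
      gaussAverage (√(1 - (s + t)) • D j)
        (gaussAverage (√t • 1 : Matrix (κ j) (κ j) ℝ) (logHeat s (φ j))) := by
  rw [interpolant, gaussAverage_pullbackSum]
  congr 1 with j : 1
  refine gaussAverage_gaussAverage_congr ?_ _
  simp only [Matrix.mul_smul, Matrix.mul_one, transpose_smul, transpose_one, Matrix.smul_mul,
    smul_smul]
  rw [Real.mul_self_sqrt ht, Real.mul_self_sqrt (by linarith), Real.mul_self_sqrt (by linarith),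
    ← hD j, smul_add, add_left_comm, ← add_smul, sub_add_eq_sub_sub, sub_add_cancel]

theorem logHeat_le_interpolant_add (hp : ∀ j, 0 ≤ p j)
    (hD : ∀ j, C j * (C j)ᵀ + D j * (D j)ᵀ = 1) (hC : ∑ j, p j • ((C j)ᵀ * C j) = 1)
    {φ : ∀ j, (κ j → ℝ) →ᵇ ℝ} {s t c e : ℝ} {F : (ι → ℝ) →ᵇ ℝ} (hs : 0 ≤ s) (ht : 0 ≤ t)
    (hst : s + t ≤ 1) (hF : ∀ x, F x ≤ interpolant C p D φ s x + c)
    (hdrift : ∀ x, ∃ v, logHeat t F x ≤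
      gaussAverage (√t • 1 : Matrix ι ι ℝ) F (x + √t • v) - Real.pi * (v ⬝ᵥ v) + e) (x : ι → ℝ) :
    logHeat t F x ≤ interpolant C p D φ (s + t) x + (c + e) := by
  obtain ⟨v, hv⟩ := hdrift x
  have hcomponent (j : J) :
      gaussAverage (√(1 - (s + t)) • D j)
          (gaussAverage (√t • 1 : Matrix (κ j) (κ j) ℝ) (logHeat s (φ j)))
          (C j *ᵥ (x + √t • v)) ≤
        gaussAverage (√(1 - (s + t)) • D j) (logHeat (s + t) (φ j)) (C j *ᵥ x) +
          Real.pi * (C j *ᵥ v ⬝ᵥ C j *ᵥ v) := by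
    rw [mulVec_add, mulVec_smul, ← logHeat_logHeat hs ht]
    exact gaussAverage_add_le_add _ (fun y => gaussAverage_le_logHeat_add t _ y _) _
  calc logHeat t F x
      ≤ gaussAverage (√t • 1 : Matrix ι ι ℝ) F (x + √t • v) - Real.pi * (v ⬝ᵥ v) + e := hv
    _ ≤ gaussAverage (√t • 1 : Matrix ι ι ℝ) (interpolant C p D φ s) (x + √t • v) + c
          - Real.pi * (v ⬝ᵥ v) + e := by
        gcongr
        simpa using gaussAverage_add_le_add (√t • 1 : Matrix ι ι ℝ) (v := 0) (by simpa using hF)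
          (x + √t • v)
    _ ≤ ∑ j, p j * (gaussAverage (√(1 - (s + t)) • D j) (logHeat (s + t) (φ j)) (C j *ᵥ x) +
          Real.pi * (C j *ᵥ v ⬝ᵥ C j *ᵥ v)) + c - Real.pi * (v ⬝ᵥ v) + e := by
        rw [gaussAverage_interpolant hD φ ht hst, pullbackSum_apply]
        gcongr with j
        · exact hp j
        · exact hcomponent j
    _ = interpolant C p D φ (s + t) x + (c + e) := by
        rw [interpolant, pullbackSum_apply, ← sum_mul_dotProduct_mulVec_self hC v, Finset.mul_sum]
        simp only [mul_add, Finset.sum_add_distrib, mul_left_comm]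
        ring

theorem logHeat_one_le_interpolant (hp : ∀ j, 0 ≤ p j)
    (hD : ∀ j, C j * (C j)ᵀ + D j * (D j)ᵀ = 1) (hC : ∑ j, p j • ((C j)ᵀ * C j) = 1)
    {φ : ∀ j, (κ j → ℝ) →ᵇ ℝ} {ψ : (ι → ℝ) →ᵇ ℝ} (hψ : ContDiff ℝ 2 ψ)
    (hsupp : HasCompactSupport (fderiv ℝ ψ)) (hle : ∀ x, ψ x ≤ interpolant C p D φ 0 x)
    (x : ι → ℝ) :
    logHeat 1 ψ x ≤ interpolant C p D φ 1 x := by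
  obtain ⟨L, K, hL, hTaylor⟩ := exists_taylorBound_logHeat hψ hsupp
  obtain ⟨B, hB⟩ := exists_logHeat_le_gaussAverage_sub (ι := ι) hL K
  have hiterate (N : ℕ) (hN : 0 < N) (k : ℕ) (hk : k ≤ N) (x : ι → ℝ) :
      logHeat (k / N) ψ x ≤ interpolant C p D φ (k / N) x + k * (B * (1 / N) ^ 2) := by
    induction k generalizing x with
    | zero => simpa using hle x
    | succ k ih =>
      have hst : ((k + 1 : ℕ) : ℝ) / N = k / N + 1 / N := by rw [← add_div]; simp
      have hNpos : (0 : ℝ) < N := by exact_mod_cast hN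
      have hkN : (k + 1 : ℝ) ≤ N := by exact_mod_cast hk
      obtain ⟨a, ha⟩ := hTaylor (k / N)
      rw [hst, ← logHeat_logHeat (by positivity) (by positivity), Nat.cast_succ, add_one_mul]
      refine logHeat_le_interpolant_add hp hD hC (by positivity) (by positivity) ?_
        (ih (Nat.le_of_succ_le hk)) (hB _ a ha _ ⟨by positivity, ?_⟩) x
      · rwa [← add_div, div_le_one hNpos]
      · rw [div_le_one hNpos]
        exact_mod_cast Nat.one_le_iff_ne_zero.2 hN.ne'
  have hlimit : Filter.Tendsto (fun N : ℕ => interpolant C p D φ 1 x + B / N) Filter.atTop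
      (nhds (interpolant C p D φ 1 x)) := by
    simpa using (tendsto_const_div_atTop_nhds_zero_nat B).const_add (interpolant C p D φ 1 x)
  refine ge_of_tendsto hlimit ?_
  filter_upwards [Filter.eventually_gt_atTop 0] with N hN
  have hN0 : (N : ℝ) ≠ 0 := by exact_mod_cast hN.ne'
  have herror : (N : ℝ) * (B * (1 / N) ^ 2) = B / N := by field_simp
  simpa only [div_self hN0, herror] using hiterate N hN N le_rfl x

end Interpolation

section Approximation

variable {ι : Type*} [Fintype ι]

lemma exists_contDiff_le_hasCompactSupport_fderiv (φ : (ι → ℝ) →ᵇ ℝ) {R ε : ℝ} (hR : 0 ≤ R)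
    (hε : 0 < ε) :
    ∃ ψ : (ι → ℝ) →ᵇ ℝ, ContDiff ℝ 2 ψ ∧ HasCompactSupport (fderiv ℝ ψ) ∧
      (∀ x, ψ x ≤ φ x) ∧ ∀ x, ‖x‖ ≤ R → φ x ≤ ψ x + ε := by
  let χ : ContDiffBump (0 : ι → ℝ) := ⟨R + 1, R + 2, by positivity, by linarith⟩
  let f : (ι → ℝ) → ℝ := fun x => χ x * (φ x + ‖φ‖)
  have hf : Continuous f := χ.continuous.mul (by fun_prop)
  obtain ⟨g, hg, hgf, hsupp⟩ :=
    hf.exists_contDiff_approx 2 (continuous_const (y := ε / 2)) fun _ => half_pos hε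
  have hcompact : HasCompactSupport g :=
    (χ.hasCompactSupport.mul_right (f' := fun x => φ x + ‖φ‖)).mono hsupp
  obtain ⟨M, hM⟩ := hcompact.exists_bound_of_continuous hg.continuous
  have hgf (x : ι → ℝ) : |g x - f x| < ε / 2 := hgf x
  refine ⟨.ofNormedAddCommGroup g hg.continuous M hM - .const _ (‖φ‖ + ε / 2),
    hg.sub contDiff_const, ?_, fun x => ?_, fun x hx => ?_⟩
  · convert hcompact.fderiv ℝ using 1
    exact funext fun x => fderiv_sub_const _
  · have hφ : 0 ≤ φ x + ‖φ‖ := by linarith [(abs_le.1 (φ.norm_coe_le_norm x)).1]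
    have hfφ : f x ≤ φ x + ‖φ‖ := mul_le_of_le_one_left hφ χ.le_one
    have := (abs_lt.1 (hgf x)).2
    change g x - (‖φ‖ + ε / 2) ≤ φ x
    linarith
  · have hfφ : f x = φ x + ‖φ‖ := by
      simp only [f]
      rw [χ.one_of_mem_closedBall (by simpa [χ] using hx.trans (by linarith)), one_mul]
    have := (abs_lt.1 (hgf x)).1
    change φ x ≤ g x - (‖φ‖ + ε / 2) + ε
    linarith

lemma tendsto_logHeat [DecidableEq ι] (t : ℝ) {ψ : ℕ → (ι → ℝ) →ᵇ ℝ} {φ : (ι → ℝ) →ᵇ ℝ}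
    (hle : ∀ k x, ψ k x ≤ φ x)
    (hlim : ∀ x, Filter.Tendsto (fun k => ψ k x) Filter.atTop (nhds (φ x))) (x : ι → ℝ) :
    Filter.Tendsto (fun k => logHeat t (ψ k) x) Filter.atTop (nhds (logHeat t φ x)) := by
  refine Filter.Tendsto.log ?_ (gaussAverage_expBounded_pos _ φ x).ne'
  refine tendsto_integral_of_dominated_convergence _
    (fun k => (integrable_comp_add_mulVec _ (expBounded (ψ k)) x).aestronglyMeasurable)
    (integrable_comp_add_mulVec (√t • 1 : Matrix ι ι ℝ) (expBounded φ) x)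
    (fun k => .of_forall fun ξ => ?_) (.of_forall fun ξ => ?_)
  · simpa using hle k _
  · exact (Real.continuous_exp.tendsto _).comp (hlim _)

end Approximation

theorem logHeat_one_pullbackSum_le {ι J : Type*} [Fintype ι] [DecidableEq ι] [Fintype J]
    {κ δ : J → Type*} [∀ j, Fintype (κ j)] [∀ j, DecidableEq (κ j)] [∀ j, Fintype (δ j)]
    {C : ∀ j, Matrix (κ j) ι ℝ} {p : J → ℝ} {D : ∀ j, Matrix (κ j) (δ j) ℝ} (hp : ∀ j, 0 ≤ p j)
    (hD : ∀ j, C j * (C j)ᵀ + D j * (D j)ᵀ = 1) (hC : ∑ j, p j • ((C j)ᵀ * C j) = 1)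
    (φ : ∀ j, (κ j → ℝ) →ᵇ ℝ) (x : ι → ℝ) :
    logHeat 1 (pullbackSum C p fun j => gaussAverage (D j) (φ j)) x ≤
      ∑ j, p j * logHeat 1 (φ j) (C j *ᵥ x) := by
  have hzero : interpolant C p D φ 0 = pullbackSum C p fun j => gaussAverage (D j) (φ j) := by
    simp [interpolant]
  have hone : interpolant C p D φ 1 x = ∑ j, p j * logHeat 1 (φ j) (C j *ᵥ x) := by
    simp [interpolant, pullbackSum_apply]
  rw [← hzero, ← hone]
  choose ψ hψ hsupp hle happrox using fun k : ℕ => exists_contDiff_le_hasCompactSupport_fderiv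
    (interpolant C p D φ 0) k.cast_nonneg (Nat.one_div_pos_of_nat (α := ℝ) (n := k))
  refine le_of_tendsto' (tendsto_logHeat 1 hle (fun y => ?_) x) fun k =>
    logHeat_one_le_interpolant hp hD hC (hψ k) (hsupp k) (hle k) x
  have hlower : Filter.Tendsto (fun k : ℕ => interpolant C p D φ 0 y - 1 / ((k : ℝ) + 1))
      Filter.atTop (nhds (interpolant C p D φ 0 y)) := by
    simpa using tendsto_one_div_add_atTop_nhds_zero_nat.const_sub (interpolant C p D φ 0 y)
  refine tendsto_of_tendsto_of_tendsto_of_le_of_le' hlower tendsto_const_nhds ?_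
    (.of_forall fun k => hle k y)
  filter_upwards [Filter.eventually_ge_atTop ⌈‖y‖⌉₊] with k hk
  linarith [happrox k y (Nat.ceil_le.1 hk)]

section Truncation

/-- The truncation `max (min u N) (-N)` of a continuous function, as a bounded one. -/
def truncate {α : Type*} [TopologicalSpace α] (N : ℕ) (u : C(α, ℝ)) : α →ᵇ ℝ :=
  .ofNormedAddCommGroup (fun x => max (min (u x) N) (-N)) (by fun_prop) N fun x =>
    abs_le.2 ⟨le_max_right _ _, max_le (min_le_right _ _) (by simp)⟩

lemma truncate_apply {α : Type*} [TopologicalSpace α] (N : ℕ) (u : C(α, ℝ)) (x : α) :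
    truncate N u x = max (min (u x) N) (-N) := rfl

variable {ι κ : Type*} [Fintype κ]

lemma tendsto_integral_min_add_dotProduct_gaussMeasure (a : κ → ℝ) (b : ℝ) :
    Filter.Tendsto (fun N : ℕ => ∫ ξ, min (b + a ⬝ᵥ ξ) N ∂gaussMeasure κ) Filter.atTop
      (nhds b) := by
  have hint : Integrable (fun ξ => b + a ⬝ᵥ ξ) (gaussMeasure κ) :=
    (integrable_const b).add (integrable_dotProduct_gaussMeasure a)
  have hmean : ∫ ξ, (b + a ⬝ᵥ ξ) ∂gaussMeasure κ = b := by
    rw [integral_add (integrable_const b) (integrable_dotProduct_gaussMeasure a),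
      integral_dotProduct_gaussMeasure]
    simp
  nth_rewrite 2 [← hmean]
  refine tendsto_integral_of_dominated_convergence (fun ξ => ‖b + a ⬝ᵥ ξ‖)
    (fun N => Continuous.aestronglyMeasurable (by fun_prop)) hint.norm
    (fun N => .of_forall fun ξ => ?_) (.of_forall fun ξ => ?_)
  · rw [Real.norm_eq_abs, Real.norm_eq_abs, abs_le]
    exact ⟨le_min (neg_abs_le _) ((neg_nonpos.2 (abs_nonneg _)).trans N.cast_nonneg),
      (min_le_left _ _).trans (le_abs_self _)⟩
  · refine tendsto_const_nhds.congr' ?_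
    filter_upwards [Filter.eventually_ge_atTop ⌈b + a ⬝ᵥ ξ⌉₊] with N hN
    exact (min_eq_left (Nat.ceil_le.1 hN)).symm

lemma exists_add_dotProduct_le_of_convexOn {ψ : (κ → ℝ) → ℝ} (hψ : ConvexOn ℝ Set.univ ψ) {b : ℝ}
    (hb : b < ψ 0) : ∃ a : κ → ℝ, ∀ ξ, b + a ⬝ᵥ ξ ≤ ψ ξ := by
  classical
  obtain ⟨l, c, hle, hzero⟩ := hψ.exists_affine_le_of_lt (𝕜 := ℝ) (Set.mem_univ 0) hb
    isClosed_univ (hψ.locallyLipschitz.continuous.lowerSemicontinuous.lowerSemicontinuousOn _)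
  obtain rfl : c = b := by simpa using hzero
  refine ⟨(dotProductEquiv ℝ κ).symm l.toLinearMap, fun ξ => ?_⟩
  have hl : (dotProductEquiv ℝ κ).symm l.toLinearMap ⬝ᵥ ξ = l ξ :=
    LinearMap.congr_fun ((dotProductEquiv ℝ κ).apply_symm_apply l.toLinearMap) ξ
  rw [hl, add_comm]
  exact hle ⟨ξ, Set.mem_univ ξ⟩

lemma eventually_le_gaussAverage_truncate [Finite ι] (A : Matrix ι κ ℝ) {u : C(ι → ℝ, ℝ)}
    {x : ι → ℝ} (hu : ConvexOn ℝ Set.univ fun ξ => u (x + A *ᵥ ξ)) {c : ℝ} (hc : c < u x) :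
    ∀ᶠ N : ℕ in Filter.atTop, c ≤ gaussAverage A (truncate N u) x := by
  obtain ⟨b, hcb, hb⟩ := exists_between hc
  obtain ⟨a, ha⟩ := exists_add_dotProduct_le_of_convexOn hu (b := b) (by simpa using hb)
  filter_upwards [(tendsto_integral_min_add_dotProduct_gaussMeasure a b).eventually
    (lt_mem_nhds hcb)] with N hN
  exact hN.le.trans <| integral_mono
    (((integrable_const b).add (integrable_dotProduct_gaussMeasure a)).inf (integrable_const _))
    (integrable_comp_add_mulVec A _ x) fun ξ =>
      (min_le_min_right _ (ha ξ)).trans (le_max_left _ _)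

lemma tendsto_integral_exp_truncate {u : C(κ → ℝ, ℝ)}
    (hu : Integrable (fun y => Real.exp (u y)) (gaussMeasure κ)) :
    Filter.Tendsto (fun N : ℕ => ∫ y, Real.exp (truncate N u y) ∂gaussMeasure κ) Filter.atTop
      (nhds (∫ y, Real.exp (u y) ∂gaussMeasure κ)) := by
  refine tendsto_integral_of_dominated_convergence (fun y => Real.exp (u y) + 1)
    (fun N => Continuous.aestronglyMeasurable (by fun_prop)) (hu.add (integrable_const 1))
    (fun N => .of_forall fun y => ?_) (.of_forall fun y => ?_)
  · rw [Real.norm_eq_abs, Real.abs_exp, truncate_apply, Real.exp_monotone.map_max]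
    refine max_le ?_ ?_
    · have := Real.exp_le_exp.2 (min_le_left (u y) (N : ℝ))
      linarith
    · have := Real.exp_le_one_iff.2 (neg_nonpos.2 (N.cast_nonneg (α := ℝ)))
      linarith [Real.exp_pos (u y)]
  · refine tendsto_const_nhds.congr' ?_
    filter_upwards [Filter.eventually_ge_atTop ⌈|u y|⌉₊] with N hN
    have := abs_le.1 (Nat.ceil_le.1 hN)
    rw [truncate_apply, min_eq_left this.2, max_eq_left this.1]

end Truncation

section GaussianInequality

variable {ι J : Type*} [Fintype ι] [Fintype J] {κ δ : J → Type*} [∀ j, Fintype (δ j)]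
  {C : ∀ j, Matrix (κ j) ι ℝ} {p : J → ℝ} {D : ∀ j, Matrix (κ j) (δ j) ℝ}

lemma ofReal_exp_sum_le_liminf [∀ j, Finite (κ j)] (hp : ∀ j, 0 ≤ p j) {u : ∀ j, C(κ j → ℝ, ℝ)}
    (hu : ∀ j x, ConvexOn ℝ Set.univ fun ξ => u j (x + D j *ᵥ ξ)) (x : ι → ℝ) :
    ENNReal.ofReal (Real.exp (∑ j, p j * u j (C j *ᵥ x))) ≤
      Filter.liminf (fun N => ENNReal.ofReal <| Real.exp <|
        pullbackSum C p (fun j => gaussAverage (D j) (truncate N (u j))) x) Filter.atTop := by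
  have hlim : Filter.Tendsto (fun ε : ℝ =>
      ENNReal.ofReal (Real.exp (∑ j, p j * (u j (C j *ᵥ x) - ε)))) (nhdsWithin 0 (Set.Ioi 0))
      (nhds (ENNReal.ofReal (Real.exp (∑ j, p j * u j (C j *ᵥ x))))) :=
    tendsto_nhdsWithin_of_tendsto_nhds <| ENNReal.tendsto_ofReal <|
      Continuous.tendsto' (by fun_prop) _ _ (by simp)
  refine le_of_tendsto hlim (eventually_mem_nhdsWithin.mono fun ε (hε : 0 < ε) => ?_)
  refine Filter.le_liminf_of_le (by isBoundedDefault) ?_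
  filter_upwards [Filter.eventually_all.2 fun j =>
    eventually_le_gaussAverage_truncate (D j) (hu j (C j *ᵥ x)) (sub_lt_self _ hε)] with N hN
  rw [pullbackSum_apply]
  gcongr with j
  · exact hp j
  · exact hN j

variable [DecidableEq ι] [∀ j, Fintype (κ j)] [∀ j, DecidableEq (κ j)]

theorem integral_exp_pullbackSum_gaussAverage_le (hp : ∀ j, 0 ≤ p j)
    (hD : ∀ j, C j * (C j)ᵀ + D j * (D j)ᵀ = 1) (hC : ∑ j, p j • ((C j)ᵀ * C j) = 1)
    (φ : ∀ j, (κ j → ℝ) →ᵇ ℝ) :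
    ∫ ξ, Real.exp (pullbackSum C p (fun j => gaussAverage (D j) (φ j)) ξ) ∂gaussMeasure ι ≤
      ∏ j, (∫ y, Real.exp (φ j y) ∂gaussMeasure (κ j)) ^ p j := by
  have h := Real.exp_le_exp.2 (logHeat_one_pullbackSum_le hp hD hC φ 0)
  simpa only [exp_logHeat_one_zero, mulVec_zero, Real.exp_sum, mul_comm (p _), Real.exp_mul] using h

theorem lintegral_exp_sum_gaussMeasure_le (hp : ∀ j, 0 ≤ p j)
    (hD : ∀ j, C j * (C j)ᵀ + D j * (D j)ᵀ = 1) (hC : ∑ j, p j • ((C j)ᵀ * C j) = 1)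
    {u : ∀ j, C(κ j → ℝ, ℝ)} (hu : ∀ j x, ConvexOn ℝ Set.univ fun ξ => u j (x + D j *ᵥ ξ))
    (hint : ∀ j, Integrable (fun y => Real.exp (u j y)) (gaussMeasure (κ j))) :
    ∫⁻ ξ, ENNReal.ofReal (Real.exp (∑ j, p j * u j (C j *ᵥ ξ))) ∂gaussMeasure ι ≤
      ENNReal.ofReal (∏ j, (∫ y, Real.exp (u j y) ∂gaussMeasure (κ j)) ^ p j) := by
  let v (N : ℕ) : (ι → ℝ) →ᵇ ℝ := pullbackSum C p fun j => gaussAverage (D j) (truncate N (u j))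
  have hbound (N : ℕ) : ∫⁻ ξ, ENNReal.ofReal (Real.exp (v N ξ)) ∂gaussMeasure ι ≤
      ENNReal.ofReal (∏ j, (∫ y, Real.exp (truncate N (u j) y) ∂gaussMeasure (κ j)) ^ p j) := by
    rw [← ofReal_integral_eq_lintegral_ofReal
      (by simpa using integrable_comp_add_mulVec (1 : Matrix ι ι ℝ) (expBounded (v N)) 0)
      (.of_forall fun ξ => Real.exp_nonneg _)]
    exact ENNReal.ofReal_le_ofReal (integral_exp_pullbackSum_gaussAverage_le hp hD hC _)
  calc ∫⁻ ξ, ENNReal.ofReal (Real.exp (∑ j, p j * u j (C j *ᵥ ξ))) ∂gaussMeasure ι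
      ≤ ∫⁻ ξ, Filter.liminf (fun N => ENNReal.ofReal (Real.exp (v N ξ))) Filter.atTop
          ∂gaussMeasure ι := lintegral_mono fun ξ => ofReal_exp_sum_le_liminf hp hu ξ
    _ ≤ Filter.liminf (fun N => ∫⁻ ξ, ENNReal.ofReal (Real.exp (v N ξ)) ∂gaussMeasure ι)
          Filter.atTop := lintegral_liminf_le fun N => Measurable.ennreal_ofReal
            (Continuous.measurable (by fun_prop))
    _ ≤ Filter.liminf (fun N => ENNReal.ofReal
          (∏ j, (∫ y, Real.exp (truncate N (u j) y) ∂gaussMeasure (κ j)) ^ p j)) Filter.atTop :=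
        Filter.liminf_le_liminf (.of_forall hbound)
    _ = ENNReal.ofReal (∏ j, (∫ y, Real.exp (u j y) ∂gaussMeasure (κ j)) ^ p j) :=
        (ENNReal.tendsto_ofReal (tendsto_finsetProd _ fun j _ =>
          (tendsto_integral_exp_truncate (hint j)).rpow_const (.inr (hp j)))).liminf_eq

theorem lintegral_prod_exp_mul_exp_le (hp : ∀ j, 0 ≤ p j)
    (hD : ∀ j, C j * (C j)ᵀ + D j * (D j)ᵀ = 1) (hC : ∑ j, p j • ((C j)ᵀ * C j) = 1)
    {u : ∀ j, C(κ j → ℝ, ℝ)} (hu : ∀ j x, ConvexOn ℝ Set.univ fun ξ => u j (x + D j *ᵥ ξ))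
    (hint : ∀ j, Integrable fun y => Real.exp (-Real.pi * (y ⬝ᵥ y)) * Real.exp (u j y)) :
    ∫⁻ x : ι → ℝ, ENNReal.ofReal (∏ j,
        (Real.exp (-Real.pi * (C j *ᵥ x ⬝ᵥ C j *ᵥ x)) * Real.exp (u j (C j *ᵥ x))) ^ p j) ≤
      ENNReal.ofReal (∏ j, (∫ y, Real.exp (-Real.pi * (y ⬝ᵥ y)) * Real.exp (u j y)) ^ p j) := by
  have hprod (x : ι → ℝ) : ∏ j,
      (Real.exp (-Real.pi * (C j *ᵥ x ⬝ᵥ C j *ᵥ x)) * Real.exp (u j (C j *ᵥ x))) ^ p j =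
        Real.exp (-Real.pi * (x ⬝ᵥ x)) * Real.exp (∑ j, p j * u j (C j *ᵥ x)) := by
    simp_rw [← Real.exp_add, ← Real.exp_mul, ← Real.exp_sum, add_mul, Finset.sum_add_distrib]
    rw [← sum_mul_dotProduct_mulVec_self hC x, Finset.mul_sum]
    congr 2 <;> exact Finset.sum_congr rfl fun j _ => by ring
  have hγ := lintegral_exp_sum_gaussMeasure_le hp hD hC hu fun j =>
    (integrable_gaussMeasure_iff _).2 (hint j)
  rw [lintegral_gaussMeasure
    (Measurable.ennreal_ofReal (Continuous.measurable (by fun_prop)))] at hγ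
  simpa only [hprod, ENNReal.ofReal_mul (Real.exp_nonneg _), integral_gaussMeasure, smul_eq_mul]
    using hγ

end GaussianInequality

section PositiveMatrices

variable {ι κ : Type*} [Fintype κ]

section

open scoped MatrixOrder Matrix.Norms.L2Operator

lemma exists_eq_transpose_mul_self {A : Matrix κ κ ℝ} (hA : A.PosSemidef) :
    ∃ B : Matrix κ κ ℝ, A = Bᵀ * B := by
  classical
  obtain ⟨B, hB⟩ := CStarAlgebra.nonneg_iff_eq_star_mul_self.mp hA.nonneg
  exact ⟨B, by rw [hB, star_eq_conjTranspose, conjTranspose_eq_transpose_of_trivial]⟩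

end

lemma transpose_mul_mul_mulVec_dotProduct [Fintype ι] (C : Matrix κ ι ℝ) (B : Matrix κ κ ℝ)
    (x : ι → ℝ) : (Cᵀ * B * C) *ᵥ x ⬝ᵥ x = B *ᵥ (C *ᵥ x) ⬝ᵥ C *ᵥ x := by
  rw [← mulVec_mulVec, ← mulVec_mulVec, mulVec_transpose, ← dotProduct_mulVec]

lemma convexOn_mulVec_dotProduct_self {A : Matrix κ κ ℝ} (hA : A.PosSemidef) :
    ConvexOn ℝ Set.univ fun x => A *ᵥ x ⬝ᵥ x := by
  classical
  obtain ⟨B, rfl⟩ := exists_eq_transpose_mul_self hA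
  have hsq (x : κ → ℝ) : (Bᵀ * B) *ᵥ x ⬝ᵥ x = ∑ i, (B.mulVecLin x i) ^ 2 := by
    simpa [dotProduct, sq] using transpose_mul_mul_mulVec_dotProduct B 1 x
  refine ⟨convex_univ, fun x _ y _ a b ha hb hab => ?_⟩
  simp_rw [hsq, map_add, map_smul, Finset.smul_sum, ← Finset.sum_add_distrib]
  exact Finset.sum_le_sum fun i _ => even_two.convexOn_pow.2 trivial trivial ha hb hab

lemma exists_complement_of_posSemidef [DecidableEq κ] [Fintype ι] {C : Matrix κ ι ℝ}
    {W : Matrix κ κ ℝ} (hC : (1 - C * Cᵀ).PosSemidef) (hW : Wᵀ = W) (h : (1 - C * Cᵀ) * W = 0) :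
    ∃ D : Matrix κ κ ℝ, C * Cᵀ + D * Dᵀ = 1 ∧ W * D = 0 := by
  obtain ⟨B, hB⟩ := exists_eq_transpose_mul_self hC
  have hBW : B * W = 0 := by
    rwa [hB, ← conjTranspose_eq_transpose_of_trivial, conjTranspose_mul_self_mul_eq_zero] at h
  refine ⟨Bᵀ, by rw [transpose_transpose, ← hB, add_sub_cancel], ?_⟩
  simpa [hW] using congrArg transpose hBW

lemma mulVec_add_mulVec_dotProduct_self [Fintype ι] {W : Matrix ι ι ℝ} {D : Matrix ι κ ℝ}
    (hW : Wᵀ = W) (hWD : W * D = 0) (x : ι → ℝ) (ξ : κ → ℝ) :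
    W *ᵥ (x + D *ᵥ ξ) ⬝ᵥ (x + D *ᵥ ξ) = W *ᵥ x ⬝ᵥ x := by
  have hWξ : W *ᵥ (D *ᵥ ξ) = 0 := by rw [mulVec_mulVec, hWD, zero_mulVec]
  have hcross : W *ᵥ x ⬝ᵥ D *ᵥ ξ = 0 := by
    rw [← hW, mulVec_transpose, ← dotProduct_mulVec, hWξ, dotProduct_zero]
  rw [mulVec_add, hWξ, add_zero, dotProduct_add, hcross, add_zero]

lemma posDef_sum_smul_transpose_mul_mul [Fintype ι] {J : Type*} [Fintype J] {κ : J → Type*}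
    [∀ j, Fintype (κ j)] {C : ∀ j, Matrix (κ j) ι ℝ} {p : J → ℝ} {B : ∀ j, Matrix (κ j) (κ j) ℝ}
    (hker : ∀ x, (∀ j, C j *ᵥ x = 0) → x = 0) (hp : ∀ j, 0 < p j) (hB : ∀ j, (B j).PosDef) :
    (∑ j, p j • ((C j)ᵀ * B j * C j)).PosDef := by
  have hsymm : (∑ j, p j • ((C j)ᵀ * B j * C j)).PosSemidef :=
    Matrix.posSemidef_sum _ fun j _ => by
      simpa using ((hB j).posSemidef.conjTranspose_mul_mul_same (C j)).smul (hp j).le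
  refine Matrix.PosDef.of_dotProduct_mulVec_pos hsymm.isHermitian fun x hx => ?_
  have hform : star x ⬝ᵥ (∑ j, p j • ((C j)ᵀ * B j * C j)) *ᵥ x =
      ∑ j, p j * (star (C j *ᵥ x) ⬝ᵥ B j *ᵥ (C j *ᵥ x)) := by
    simp_rw [star_trivial, dotProduct_comm x, sum_mulVec, sum_dotProduct, smul_mulVec,
      smul_dotProduct, transpose_mul_mul_mulVec_dotProduct, smul_eq_mul, dotProduct_comm]
  obtain ⟨j, hj⟩ : ∃ j, C j *ᵥ x ≠ 0 := by
    by_contra! h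
    exact hx (hker x h)
  rw [hform]
  exact Finset.sum_pos' (fun i _ => mul_nonneg (hp i).le
    ((hB i).posSemidef.dotProduct_mulVec_nonneg _))
    ⟨j, Finset.mem_univ j, mul_pos (hp j) ((hB j).dotProduct_mulVec_pos hj)⟩

end PositiveMatrices

section GaussianFunctions

variable {k n : ℕ}

lemma gaussFn_pos (A : Matrix (Fin k) (Fin k) ℝ) (x : Fin k → ℝ) : 0 < gaussFn A x :=
  Real.exp_pos _

lemma continuous_gaussFn (A : Matrix (Fin k) (Fin k) ℝ) : Continuous (gaussFn A) := by
  unfold gaussFn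
  fun_prop

lemma gaussFn_transpose_mul_mul (C : Matrix (Fin k) (Fin n) ℝ) (B : Matrix (Fin k) (Fin k) ℝ)
    (x : Fin n → ℝ) : gaussFn (Cᵀ * B * C) x = gaussFn B (C *ᵥ x) := by
  rw [gaussFn, gaussFn, transpose_mul_mul_mulVec_dotProduct]

lemma prod_gaussFn_mulVec_rpow {J : Type*} [Fintype J] {ni : J → ℕ}
    (C : ∀ j, Matrix (Fin (ni j)) (Fin n) ℝ) (p : J → ℝ)
    (B : ∀ j, Matrix (Fin (ni j)) (Fin (ni j)) ℝ) (x : Fin n → ℝ) :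
    ∏ j, gaussFn (B j) (C j *ᵥ x) ^ p j = gaussFn (∑ j, p j • ((C j)ᵀ * B j * C j)) x := by
  simp_rw [← gaussFn_transpose_mul_mul, gaussFn, ← Real.exp_mul, ← Real.exp_sum, sum_mulVec,
    sum_dotProduct, smul_mulVec, smul_dotProduct, Finset.mul_sum, smul_eq_mul]
  congr! 2
  ring

lemma lintegral_gaussFn_one : ∫⁻ x : Fin k → ℝ, ENNReal.ofReal (gaussFn 1 x) = 1 := by
  simpa [gaussFn] using
    (lintegral_gaussMeasure (ι := Fin k) (f := fun _ => 1) measurable_const).symm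

lemma lintegral_gaussFn {A : Matrix (Fin k) (Fin k) ℝ} (hA : A.PosDef) :
    ∫⁻ x, ENNReal.ofReal (gaussFn A x) = ENNReal.ofReal (√A.det)⁻¹ := by
  obtain ⟨N, rfl⟩ := exists_eq_transpose_mul_self hA.posSemidef
  have hN : N.det ≠ 0 := fun h => by simpa [h] using hA.det_pos
  have hcomp (x : Fin k → ℝ) : gaussFn (Nᵀ * N) x = gaussFn 1 (toLin' N x) := by
    rw [toLin'_apply, ← gaussFn_transpose_mul_mul, Matrix.mul_one]
  simp_rw [hcomp]
  rw [← lintegral_map (μ := volume) (f := fun y => ENNReal.ofReal (gaussFn 1 y))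
    (continuous_gaussFn 1).measurable.ennreal_ofReal
    (toLin' N).continuous_of_finiteDimensional.measurable,
    Real.map_matrix_volume_pi_eq_smul_volume_pi hN, lintegral_smul_measure, lintegral_gaussFn_one,
    smul_eq_mul, mul_one, det_mul, det_transpose, Real.sqrt_mul_self_eq_abs, abs_inv]

lemma integrable_gaussFn {A : Matrix (Fin k) (Fin k) ℝ} (hA : A.PosDef) :
    Integrable (gaussFn A) := by
  refine ⟨(continuous_gaussFn A).aestronglyMeasurable, ?_⟩
  rw [hasFiniteIntegral_iff_ofReal (.of_forall fun x => (gaussFn_pos A x).le),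
    lintegral_gaussFn hA]
  exact ENNReal.ofReal_lt_top

lemma logConvexFun_exp {φ : (Fin k → ℝ) → ℝ} (hφ : ConvexOn ℝ Set.univ φ) :
    LogConvexFun fun x => Real.exp (φ x) := by
  refine ⟨fun x => Real.exp_nonneg _, fun x y a b ha hb hab => ?_⟩
  rw [← Real.exp_mul, ← Real.exp_mul, ← Real.exp_add, Real.exp_le_exp, mul_comm (φ x),
    mul_comm (φ y)]
  exact hφ.2 trivial trivial ha hb hab

lemma LogConvexFun.convexOn_log {h : (Fin k → ℝ) → ℝ} (hh : LogConvexFun h)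
    (hpos : ∀ x, 0 < h x) : ConvexOn ℝ Set.univ fun x => Real.log (h x) := by
  refine ⟨convex_univ, fun x _ y _ a b ha hb hab => ?_⟩
  have := Real.log_le_log (hpos _) (hh.2 x y a b ha hb hab)
  rwa [Real.log_mul (Real.rpow_pos_of_pos (hpos x) _).ne' (Real.rpow_pos_of_pos (hpos y) _).ne',
    Real.log_rpow (hpos x), Real.log_rpow (hpos y)] at this

lemma LogConvexFun.eq_zero_of_eq_zero {h : (Fin k → ℝ) → ℝ} (hh : LogConvexFun h)
    {z : Fin k → ℝ} (hz : h z = 0) (x : Fin k → ℝ) : h x = 0 := by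
  have hmid := hh.2 z ((2 : ℝ) • x - z) 2⁻¹ 2⁻¹ (by norm_num) (by norm_num) (by norm_num)
  rw [hz, Real.zero_rpow (by norm_num), zero_mul, ← smul_add, add_sub_cancel, smul_smul,
    inv_mul_cancel₀ two_ne_zero, one_smul] at hmid
  exact hmid.antisymm (hh.1 x)

lemma moreLogConvex_gaussFn {B Q : Matrix (Fin k) (Fin k) ℝ} (h : (Q - B).PosSemidef) :
    MoreLogConvex (gaussFn B) Q := by
  refine ⟨_, logConvexFun_exp ((convexOn_mulVec_dotProduct_self h).smul Real.pi_nonneg), ?_⟩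
  funext x
  rw [gaussFn, gaussFn, ← Real.exp_add, sub_mulVec, sub_dotProduct, smul_eq_mul]
  ring_nf

lemma gaussFn_mul_eq {Q : Matrix (Fin k) (Fin k) ℝ} {h : (Fin k → ℝ) → ℝ} {x : Fin k → ℝ}
    (hx : 0 < h x) : gaussFn Q x * h x = Real.exp (-Real.pi * (x ⬝ᵥ x)) *
      Real.exp (Real.log (h x) - Real.pi * ((Q - 1) *ᵥ x ⬝ᵥ x)) := by
  rw [gaussFn, sub_mulVec, one_mulVec, sub_dotProduct, ← Real.exp_add]
  nth_rewrite 1 [← Real.exp_log hx]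
  rw [← Real.exp_add]
  ring_nf

lemma prod_inv_sqrt_rpow {J : Type*} (s : Finset J) {b : J → ℝ} (hb : ∀ j, 0 ≤ b j) (p : J → ℝ) :
    ∏ j ∈ s, (√(b j))⁻¹ ^ p j = (√(∏ j ∈ s, b j ^ p j))⁻¹ := by
  rw [Real.sqrt_eq_rpow, ← Real.finsetProd_rpow _ _ fun j _ => Real.rpow_nonneg (hb j) _,
    ← Finset.prod_inv_distrib]
  refine Finset.prod_congr rfl fun j _ => ?_
  rw [Real.inv_rpow (Real.sqrt_nonneg _), Real.sqrt_eq_rpow, ← Real.rpow_mul (hb j),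
    ← Real.rpow_mul (hb j), mul_comm]

end GaussianFunctions

section GeometricData

variable {n m : ℕ} {ni : Fin m → ℕ} {C : ∀ j, Matrix (Fin (ni j)) (Fin n) ℝ} {p : Fin m → ℝ}
  {Q : ∀ j, Matrix (Fin (ni j)) (Fin (ni j)) ℝ}

lemma GeometricDatum.lintegral_prod_gaussFn_mul_le (hgeo : GeometricDatum C p Q)
    (hp : ∀ j, 0 ≤ p j) {h : ∀ j, (Fin (ni j) → ℝ) → ℝ} (hpos : ∀ j x, 0 < h j x)
    (hh : ∀ j, LogConvexFun (h j)) (hint : ∀ j, Integrable fun x => gaussFn (Q j) x * h j x) :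
    ∫⁻ x, ENNReal.ofReal (∏ j, (gaussFn (Q j) (C j *ᵥ x) * h j (C j *ᵥ x)) ^ p j) ≤
      ENNReal.ofReal (∏ j, (∫ y, gaussFn (Q j) y * h j y) ^ p j) := by
  obtain ⟨hCC, hW, hCW, hC⟩ := hgeo
  have hsymm (j : Fin m) : (Q j - 1)ᵀ = Q j - 1 := by
    simpa using (hW j).isHermitian.eq
  choose D hD hWD using fun j => exists_complement_of_posSemidef (hCC j) (hsymm j) (hCW j)
  have hlog (j : Fin m) := (hh j).convexOn_log (hpos j)
  let u (j : Fin m) : C(Fin (ni j) → ℝ, ℝ) :=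
    ⟨fun y => Real.log (h j y) - Real.pi * ((Q j - 1) *ᵥ y ⬝ᵥ y),
      (hlog j).locallyLipschitz.continuous.sub (by fun_prop)⟩
  have hu (j : Fin m) (x : Fin (ni j) → ℝ) :
      ConvexOn ℝ Set.univ fun ξ => u j (x + D j *ᵥ ξ) := by
    simp only [u, ContinuousMap.coe_mk, mulVec_add_mulVec_dotProduct_self (hsymm j) (hWD j)]
    exact (((hlog j).translate_right x).comp_linearMap (D j).mulVecLin).add_const (-_)
  have hexp (j : Fin m) (y : Fin (ni j) → ℝ) : gaussFn (Q j) y * h j y =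
      Real.exp (-Real.pi * (y ⬝ᵥ y)) * Real.exp (u j y) := gaussFn_mul_eq (hpos j y)
  simp_rw [hexp] at hint ⊢
  exact lintegral_prod_exp_mul_exp_le hp hD hC hu hint

theorem GeometricDatum.lintegral_prod_le (hgeo : GeometricDatum C p Q) (hp : ∀ j, 0 < p j)
    {f : ∀ j, (Fin (ni j) → ℝ) → ℝ} (hf : ∀ j, Integrable (f j))
    (hfQ : ∀ j, MoreLogConvex (f j) (Q j)) :
    ∫⁻ x, ENNReal.ofReal (∏ j, f j (C j *ᵥ x) ^ p j) ≤
      ∏ j, ENNReal.ofReal (∫ y, f j y) ^ p j := by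
  choose h hh hfh using hfQ
  obtain rfl : f = fun j y => gaussFn (Q j) y * h j y := funext hfh
  by_cases hzero : ∃ j z, h j z = 0
  · obtain ⟨j, z, hz⟩ := hzero
    have hprod (x : Fin n → ℝ) : ∏ j, (gaussFn (Q j) (C j *ᵥ x) * h j (C j *ᵥ x)) ^ p j = 0 :=
      Finset.prod_eq_zero (Finset.mem_univ j) (by
        rw [(hh j).eq_zero_of_eq_zero hz, mul_zero, Real.zero_rpow (hp j).ne'])
    simp [hprod]
  · push Not at hzero
    have hnonneg (j : Fin m) : 0 ≤ ∫ y, gaussFn (Q j) y * h j y :=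
      integral_nonneg fun y => mul_nonneg (gaussFn_pos _ y).le ((hh j).1 y)
    simp_rw [ENNReal.ofReal_rpow_of_nonneg (hnonneg _) (hp _).le]
    rw [← ENNReal.ofReal_prod_of_nonneg fun j _ => Real.rpow_nonneg (hnonneg j) _]
    exact hgeo.lintegral_prod_gaussFn_mul_le (fun j => (hp j).le)
      (fun j x => ((hh j).1 x).lt_of_ne' (hzero j x)) hh hf

lemma GeometricDatum.eq_zero_of_mulVec_eq_zero (hgeo : GeometricDatum C p Q) {x : Fin n → ℝ}
    (hx : ∀ j, C j *ᵥ x = 0) : x = 0 := by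
  simpa [hx, eq_comm] using sum_mul_dotProduct_mulVec_self hgeo.2.2.2 x

theorem GeometricDatum.prod_det_rpow_le_det (hgeo : GeometricDatum C p Q) (hp : ∀ j, 0 < p j)
    {B : ∀ j, Matrix (Fin (ni j)) (Fin (ni j)) ℝ} (hB : ∀ j, (B j).PosDef)
    (hBQ : ∀ j, (Q j - B j).PosSemidef) :
    ∏ j, (B j).det ^ p j ≤ (∑ j, p j • ((C j)ᵀ * B j * C j)).det := by
  have hS := posDef_sum_smul_transpose_mul_mul
    (fun _ => hgeo.eq_zero_of_mulVec_eq_zero) hp hB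
  have hprod : 0 < ∏ j, (B j).det ^ p j :=
    Finset.prod_pos fun j _ => Real.rpow_pos_of_pos (hB j).det_pos _
  have key := hgeo.lintegral_prod_le hp (fun j => integrable_gaussFn (hB j))
    fun j => moreLogConvex_gaussFn (hBQ j)
  simp_rw [prod_gaussFn_mulVec_rpow, lintegral_gaussFn hS,
    ofReal_integral_eq_lintegral_ofReal (integrable_gaussFn (hB _))
      (.of_forall fun x => (gaussFn_pos _ x).le), lintegral_gaussFn (hB _),
    ENNReal.ofReal_rpow_of_nonneg (inv_nonneg.2 (Real.sqrt_nonneg _)) (hp _).le] at key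
  rwa [← ENNReal.ofReal_prod_of_nonneg fun j _ => by positivity,
    prod_inv_sqrt_rpow _ (fun j => (hB j).det_pos.le),
    ENNReal.ofReal_le_ofReal_iff (by positivity),
    inv_le_inv₀ (Real.sqrt_pos.2 hS.det_pos) (Real.sqrt_pos.2 hprod),
    Real.sqrt_le_sqrt_iff hS.det_pos.le] at key

theorem GeometricDatum.BLconst_eq_one (hgeo : GeometricDatum C p Q) (hp : ∀ j, 0 < p j) :
    BLconst C p Q = 1 := by
  refine le_antisymm (iSup₂_le fun B hB => ?_) ?_
  · refine ENNReal.rpow_le_one (ENNReal.div_le_of_le_mul ?_) (by norm_num)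
    have hdet (j : Fin m) : 0 < (B j).det := (hB j).1.det_pos
    simp_rw [ENNReal.ofReal_rpow_of_pos (hdet _)]
    rw [one_mul, ← ENNReal.ofReal_prod_of_nonneg fun j _ => Real.rpow_nonneg (hdet j).le _]
    exact ENNReal.ofReal_le_ofReal
      (hgeo.prod_det_rpow_le_det hp (fun j => (hB j).1) fun j => (hB j).2)
  · refine le_iSup₂_of_le (fun _ => 1) (fun j => ⟨Matrix.PosDef.one, hgeo.2.1 j⟩) ?_
    simp [hgeo.2.2.2]

end GeometricData

theorem BLconst_eq_one_of_geometric_general {n m : ℕ} {ni : Fin m → ℕ}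
    (C : ∀ j, Matrix (Fin (ni j)) (Fin n) ℝ) (p : Fin m → ℝ) (hp : ∀ j, 0 < p j)
    (Q : ∀ j, Matrix (Fin (ni j)) (Fin (ni j)) ℝ) (hgeo : GeometricDatum C p Q) :
    BLconst C p Q = 1 ∧
      ∀ f : ∀ j, (Fin (ni j) → ℝ) → ℝ,
        (∀ j, Integrable (f j)) → (∀ j, MoreLogConvex (f j) (Q j)) →
        (∫⁻ x : Fin n → ℝ, ENNReal.ofReal (∏ j, f j ((C j).mulVec x) ^ p j)) ≤
          ∏ j, ENNReal.ofReal (∫ y, f j y) ^ p j :=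
  ⟨hgeo.BLconst_eq_one hp, fun _ hf hfQ => hgeo.lintegral_prod_le hp hf hfQ⟩

/-- A generalized geometric Brascamp–Lieb datum has regularized Brascamp–Lieb
constant `1`; in particular the corresponding functional inequality holds with
constant `1`. -/
theorem BLconst_eq_one_of_geometric
    {n m : ℕ} (hm : 1 ≤ m) {ni : Fin m → ℕ}
    (C : ∀ j, Matrix (Fin (ni j)) (Fin n) ℝ)
    (hCsurj : ∀ j, Function.Surjective (C j).mulVec)
    (hker : ∀ x : Fin n → ℝ, (∀ j, (C j).mulVec x = 0) → x = 0)
    (p : Fin m → ℝ) (hp : ∀ j, 0 < p j)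
    (Q : ∀ j, Matrix (Fin (ni j)) (Fin (ni j)) ℝ) (hQ : ∀ j, (Q j).PosDef)
    (hgeo : GeometricDatum C p Q) :
    BLconst C p Q = 1 ∧
      ∀ f : ∀ j, (Fin (ni j) → ℝ) → ℝ,
        (∀ j, Integrable (f j)) → (∀ j, MoreLogConvex (f j) (Q j)) →
        (∫⁻ x : Fin n → ℝ, ENNReal.ofReal (∏ j, f j ((C j).mulVec x) ^ p j)) ≤
          ∏ j, ENNReal.ofReal (∫ y, f j y) ^ p j := by
  exact BLconst_eq_one_of_geometric_general C p hp Q hgeo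
end
end

section
/- Let (C,p,Q) be a Brascamp–Lieb datum, let B = (B_j)_{j=1}^m be symmetric matrices with 0 < B_j ≤ Q_j, and set M = ∑_{j=1}^m p_j C_jᵀ B_j C_j (which is positive definite). The following are equivalent: (a) B is a global extremizer, i.e. BL(C,p,Q)² = ∏_{j=1}^m det(B_j)^{p_j} / det(M); (b) B is a local maximizer of the function (A_j)_j ↦ ∏ⱼ det(A_j)^{p_j} / det(∑ⱼ p_j C_jᵀ A_j C_j) on the set of tuples of symmetric matrices with 0 < A_j ≤ Q_j; (c) B_j^{-1} ≥ C_j M^{-1} C_jᵀ and (B_j^{-1} − C_j M^{-1} C_jᵀ)(Q_j − B_j) = 0 for every j; (d) the datum with maps C'_j = B_j^{1/2} C_j M^{-1/2}, exponents p, and matrices Q'_j = B_j^{-1/2} Q_j B_j^{-1/2} is a generalized geometric Brascamp–Lieb datum. -/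
/-!
The problem is covariant: replacing `C j` by `T j * C j * S` and moving `Q` and `B` by the
corresponding congruences multiplies the functional by a constant and transports the
Euler–Lagrange conditions. Taking square roots of `B j` and of `M⁻¹` thus moves `B` to the tuple of
identity matrices and `M` to the identity, and there the Euler–Lagrange conditions are exactly the
definition of a generalized geometric datum.

In this position `∑ⱼ pⱼ Cⱼᵀ Cⱼ = 1`, so Jensen's inequality gives
`tr ∑ⱼ pⱼ Cⱼᵀ (log Aⱼ) Cⱼ ≤ tr log (∑ⱼ pⱼ Cⱼᵀ Aⱼ Cⱼ)`. What is missing from `∑ⱼ pⱼ log det Aⱼ` on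
the left is `∑ⱼ pⱼ tr ((1 - Cⱼ Cⱼᵀ) log Aⱼ)`, and this is nonpositive because
`log Aⱼ ≤ Aⱼ - 1 ≤ Qⱼ - 1` and `(1 - Cⱼ Cⱼᵀ) (Qⱼ - 1) = 0`. Hence the identities are a global
maximizer.

Conversely, the constraint set is convex, so the derivative of the logarithm of the functional at a
local maximizer is nonpositive along every segment inside it. Moving one block from `Bⱼ` to
`Bⱼ - ε x xᵀ` shows that the multiplier `Bⱼ⁻¹ - Cⱼ M⁻¹ Cⱼᵀ` is positive semidefinite, and moving it
to `Qⱼ` gives complementary slackness.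
-/

open MeasureTheory Matrix
open scoped ENNReal

noncomputable section

namespace BrascampLieb

section PositiveMatrices

open scoped MatrixOrder ComplexOrder

variable {n 𝕜 : Type*} [Fintype n] [RCLike 𝕜]

theorem trace_mul_nonneg_of_posSemidef {A B : Matrix n n 𝕜} (hA : A.PosSemidef)
    (hB : B.PosSemidef) : 0 ≤ (A * B).trace := by
  classical
  obtain ⟨S, rfl⟩ := CStarAlgebra.nonneg_iff_eq_star_mul_self.mp hB.nonneg
  rw [← mul_assoc, trace_mul_comm, ← mul_assoc]
  exact (hA.mul_mul_conjTranspose_same S).trace_nonneg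

theorem mul_eq_zero_of_posSemidef_of_trace_mul_eq_zero {A B : Matrix n n 𝕜} (hA : A.PosSemidef)
    (hB : B.PosSemidef) (h : (A * B).trace = 0) : A * B = 0 := by
  classical
  obtain ⟨R, rfl⟩ := CStarAlgebra.nonneg_iff_eq_star_mul_self.mp hA.nonneg
  obtain ⟨S, rfl⟩ := CStarAlgebra.nonneg_iff_eq_star_mul_self.mp hB.nonneg
  simp only [star_eq_conjTranspose] at h ⊢
  have hRS : R * Sᴴ = 0 := by
    rw [← trace_conjTranspose_mul_self_eq_zero_iff, conjTranspose_mul, conjTranspose_conjTranspose,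
      ← h, mul_assoc S, trace_mul_comm S]
    simp only [mul_assoc]
  rw [mul_assoc, ← mul_assoc R, hRS, zero_mul, mul_zero]

theorem exists_posDef_mul_self_eq {A : Matrix n n 𝕜} (hA : A.PosDef) :
    ∃ R : Matrix n n 𝕜, R.PosDef ∧ R * R = A := by
  classical
  exact ⟨CFC.sqrt A, hA.isStrictlyPositive.sqrt.posDef,
    CFC.sqrt_mul_sqrt_self A hA.posSemidef.nonneg⟩

theorem spectrum_subset_Ioi_of_posDef [DecidableEq n] {A : Matrix n n 𝕜} (hA : A.PosDef) :
    spectrum ℝ A ⊆ Set.Ioi 0 :=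
  fun _ hx ↦ hA.isStrictlyPositive.spectrum_pos hx

theorem exists_posDef_sub_smul {n : Type*} [Finite n] {A H : Matrix n n 𝕜} (hA : A.PosDef)
    (hH : H.IsHermitian) :
    ∃ ε : ℝ, 0 < ε ∧ (A - ε • H).PosDef := by
  classical
  have := Fintype.ofFinite n
  cases subsingleton_or_nontrivial (Matrix n n 𝕜)
  · exact ⟨1, one_pos, by rwa [Subsingleton.elim (A - _) A]⟩
  obtain ⟨r, hr, hrA⟩ := (CFC.exists_pos_algebraMap_le_iff hA.isHermitian.isSelfAdjoint).2
    (spectrum_subset_Ioi_of_posDef hA)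
  obtain ⟨c, hc⟩ := (finite_real_spectrum (A := H)).bddAbove
  set d := max c 1
  have hd : 0 < d := lt_max_of_lt_right one_pos
  have hHd : H ≤ algebraMap ℝ _ d :=
    le_algebraMap_of_spectrum_le (fun x hx ↦ (hc hx).trans (le_max_left _ _)) hH.isSelfAdjoint
  have hrd : (r / (2 * d)) • algebraMap ℝ (Matrix n n 𝕜) d = (r / 2) • 1 := by
    rw [Algebra.algebraMap_eq_smul_one, smul_smul]
    field_simp
  refine ⟨r / (2 * d), by positivity, ?_⟩
  have hsplit : A - (r / (2 * d)) • H = (A - algebraMap ℝ _ r) +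
      (r / (2 * d)) • (algebraMap ℝ _ d - H) + (r / 2) • (1 : Matrix n n 𝕜) := by
    rw [smul_sub, hrd, Algebra.algebraMap_eq_smul_one]
    module
  rw [hsplit]
  exact .posSemidef_add (.add hrA (.smul hHd (by positivity))) (.smul .one (half_pos hr))

end PositiveMatrices

section ComplementarySlackness

variable {n : Type*} [Fintype n]

theorem posSemidef_of_trace_mul_sub_nonpos {D Q B : Matrix n n ℝ} (hD : D.IsHermitian)
    (hB : B.PosDef) (hBQ : (Q - B).PosSemidef)
    (h : ∀ X : Matrix n n ℝ, X.PosDef → (Q - X).PosSemidef → (D * (X - B)).trace ≤ 0) :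
    D.PosSemidef := by
  refine .of_dotProduct_mulVec_nonneg hD fun x ↦ ?_
  have hxx := posSemidef_vecMulVec_self_star x
  obtain ⟨ε, hε, hpos⟩ := exists_posDef_sub_smul hB hxx.isHermitian
  have hle : (Q - (B - ε • vecMulVec x (star x))).PosSemidef := by
    rw [sub_sub_eq_add_sub, add_sub_right_comm]
    exact hBQ.add (hxx.smul hε.le)
  have htrace := h _ hpos hle
  rw [sub_sub_cancel_left, mul_neg, mul_smul_comm, trace_neg, trace_smul, mul_vecMulVec,
    trace_vecMulVec, dotProduct_comm, smul_eq_mul, neg_nonpos] at htrace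
  exact nonneg_of_mul_nonneg_right htrace hε

theorem mul_sub_eq_zero_of_trace_mul_sub_nonpos {D Q B : Matrix n n ℝ} (hD : D.PosSemidef)
    (hB : B.PosDef) (hBQ : (Q - B).PosSemidef)
    (h : ∀ X : Matrix n n ℝ, X.PosDef → (Q - X).PosSemidef → (D * (X - B)).trace ≤ 0) :
    D * (Q - B) = 0 := by
  have hQ : Q.PosDef := by simpa using hB.add_posSemidef hBQ
  exact mul_eq_zero_of_posSemidef_of_trace_mul_eq_zero hD hBQ <|
    (h Q hQ (by simpa using .zero)).antisymm (trace_mul_nonneg_of_posSemidef hD hBQ)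

end ComplementarySlackness

section DeterminantDerivative

variable {n : Type*} [Fintype n] [DecidableEq n]

theorem hasDerivAt_det_one_add_smul {𝕜 : Type*} [NontriviallyNormedField 𝕜] (K : Matrix n n 𝕜) :
    HasDerivAt (fun t : 𝕜 ↦ (1 + t • K).det) K.trace 0 := by
  set q := (det (1 + (Polynomial.X : Polynomial 𝕜) • K.map Polynomial.C)).divX.divX
  have hTaylor : HasDerivAt (fun t : 𝕜 ↦ 1 + K.trace * t + q.eval t * t ^ 2) K.trace 0 := by
    simpa using (((hasDerivAt_id' 0).const_mul K.trace).const_add 1).fun_add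
      ((q.hasDerivAt 0).fun_mul (hasDerivAt_pow 2 0))
  exact hTaylor.congr_of_eventuallyEq (.of_forall (det_one_add_smul · K))

theorem hasDerivAt_log_det_add_smul {A : Matrix n n ℝ} (hA : A.det ≠ 0) (H : Matrix n n ℝ) :
    HasDerivAt (fun t : ℝ ↦ Real.log (A + t • H).det) (A⁻¹ * H).trace 0 := by
  have hdet : HasDerivAt (fun t : ℝ ↦ (A + t • H).det) (A.det * (A⁻¹ * H).trace) 0 := by
    refine ((hasDerivAt_det_one_add_smul (A⁻¹ * H)).const_mul A.det).congr_of_eventuallyEq <|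
      .of_forall fun t ↦ ?_
    dsimp only
    rw [← det_mul, mul_add, mul_one, mul_smul_comm,
      mul_nonsing_inv_cancel_left _ _ (isUnit_iff_ne_zero.mpr hA)]
  convert hdet.log (by simpa using hA) using 1
  simp [mul_div_cancel_left₀ _ hA]

end DeterminantDerivative

section FirstOrderCondition

theorem nonpos_of_isLocalMaxOn_of_hasDerivWithinAt {E : Type*} [AddCommGroup E] [Module ℝ E]
    [TopologicalSpace E] [ContinuousAdd E] [ContinuousSMul ℝ E] {s : Set E} {f : E → ℝ} {a y : E}
    {f' : ℝ} (hs : Convex ℝ s) (hf : IsLocalMaxOn f s a) (ha : a ∈ s) (hy : y ∈ s)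
    (hf' : HasDerivWithinAt (fun t : ℝ ↦ f (a + t • (y - a))) f' (Set.Icc 0 1) 0) : f' ≤ 0 := by
  let γ : ℝ → E := fun t ↦ a + t • (y - a)
  have hγ0 : γ 0 = a := by simp [γ]
  have hmaps : Set.MapsTo γ (Set.Icc 0 1) s := fun _ ht ↦ hs.add_smul_sub_mem ha hy ht
  have hmax : IsLocalMaxOn (f ∘ γ) (Set.Icc 0 1) 0 :=
    (hγ0.symm ▸ hf : IsLocalMaxOn f s (γ 0)).comp_continuousOn hmaps
      (by fun_prop) (by simp)
  have hcone : (1 : ℝ) ∈ posTangentConeAt (Set.Icc 0 1) 0 := by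
    simpa using sub_mem_posTangentConeAt_of_segment_subset (segment_eq_Icc (zero_le_one' ℝ)).subset
  simpa using hmax.hasFDerivWithinAt_nonpos hf'.hasFDerivWithinAt hcone

end FirstOrderCondition

section FunctionalCalculus

variable {n : Type*} [Fintype n] [DecidableEq n] {A : Matrix n n ℝ}

theorem dotProduct_cfc_mulVec (hA : A.IsHermitian) (f : ℝ → ℝ) (x : n → ℝ) :
    x ⬝ᵥ cfc f A *ᵥ x = ∑ i, (hA.eigenvectorBasis i ⬝ᵥ x) ^ 2 * f (hA.eigenvalues i) := by
  have hcoord (i : n) :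
      (star (hA.eigenvectorUnitary : Matrix n n ℝ) *ᵥ x) i = hA.eigenvectorBasis i ⬝ᵥ x := by
    simp [mulVec, star_apply, dotProduct]
  rw [hA.cfc_eq, Matrix.IsHermitian.cfc, Unitary.conjStarAlgAut_apply, ← mulVec_mulVec,
    ← mulVec_mulVec, dotProduct_mulVec, ← mulVec_transpose, dotProduct]
  refine Finset.sum_congr rfl fun i _ ↦ ?_
  rw [← hcoord, mulVec_diagonal, star_eq_conjTranspose, conjTranspose_eq_transpose_of_trivial]
  simp only [RCLike.ofReal_real_eq_id, Function.comp_apply, id_eq]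
  ring

theorem sum_sq_eigenvectorBasis_dotProduct (hA : A.IsHermitian) (x : n → ℝ) :
    ∑ i, (hA.eigenvectorBasis i ⬝ᵥ x) ^ 2 = x ⬝ᵥ x := by
  simpa [cfc_const_one ℝ A hA.isSelfAdjoint] using (dotProduct_cfc_mulVec hA (fun _ ↦ 1) x).symm

theorem sum_sq_eigenvectorBasis_dotProduct_mul_eigenvalues (hA : A.IsHermitian) (x : n → ℝ) :
    ∑ i, (hA.eigenvectorBasis i ⬝ᵥ x) ^ 2 * hA.eigenvalues i = x ⬝ᵥ A *ᵥ x := by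
  simpa [cfc_id' ℝ A hA.isSelfAdjoint] using (dotProduct_cfc_mulVec hA (fun t ↦ t) x).symm

theorem sum_dotProduct_mulVec_eigenvectorBasis (hA : A.IsHermitian) (X : Matrix n n ℝ) :
    ∑ i, hA.eigenvectorBasis i ⬝ᵥ X *ᵥ hA.eigenvectorBasis i = X.trace := by
  have htrace : (star (hA.eigenvectorUnitary : Matrix n n ℝ) * X *
      (hA.eigenvectorUnitary : Matrix n n ℝ)).trace = X.trace := by
    rw [trace_mul_cycle, Unitary.mul_star_self_of_mem hA.eigenvectorUnitary.2, one_mul]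
  rw [← htrace]
  refine Finset.sum_congr rfl fun i _ ↦ ?_
  rw [diag_apply, mul_mul_apply, hA.eigenvectorUnitary_transpose_apply]
  simp [star_eq_conjTranspose, conjTranspose_eq_transpose_of_trivial]

theorem trace_cfc (hA : A.IsHermitian) (f : ℝ → ℝ) :
    (cfc f A).trace = ∑ i, f (hA.eigenvalues i) := by
  rw [hA.cfc_eq, Matrix.IsHermitian.cfc, Unitary.conjStarAlgAut_apply, trace_mul_cycle,
    Unitary.coe_star_mul_self, one_mul, trace_diagonal]
  simp

theorem log_det_eq_trace_cfc_log (hA : A.PosDef) :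
    Real.log A.det = (cfc Real.log A).trace := by
  rw [trace_cfc hA.isHermitian, hA.isHermitian.det_eq_prod_eigenvalues]
  simpa using Real.log_prod fun i _ ↦ (hA.eigenvalues_pos i).ne'

open scoped MatrixOrder in
theorem cfc_log_le_sub_one (hA : A.PosDef) : cfc Real.log A ≤ A - 1 := by
  have hsa := hA.isHermitian.isSelfAdjoint
  have hfin : (spectrum ℝ A).Finite := finite_real_spectrum
  calc cfc Real.log A ≤ cfc (fun t : ℝ ↦ t - 1) A :=
        cfc_mono (fun x hx ↦ Real.log_le_sub_one_of_pos (spectrum_subset_Ioi_of_posDef hA hx))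
          (hfin.continuousOn _) (hfin.continuousOn _)
    _ = A - 1 := by rw [cfc_sub (fun t ↦ t) (fun _ ↦ 1) A, cfc_id' ℝ A, cfc_const_one ℝ A]

end FunctionalCalculus

section Definitions

variable {ι n : Type*} {κ : ι → Type*} [Fintype ι] [∀ j, Fintype (κ j)]

/-- The matrix `M = ∑ⱼ pⱼ Cⱼᵀ Aⱼ Cⱼ` attached to a tuple `A`: the weighted sum of the pullbacks of
the quadratic forms `Aⱼ` along the maps `Cⱼ`. -/
def pullbackSum (C : ∀ j, Matrix (κ j) n ℝ) (p : ι → ℝ) (A : ∀ j, Matrix (κ j) (κ j) ℝ) :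
    Matrix n n ℝ :=
  ∑ j, p j • ((C j)ᵀ * A j * C j)

/-- The squared Brascamp–Lieb quotient `∏ⱼ det(Aⱼ)^{pⱼ} / det(∑ⱼ pⱼ Cⱼᵀ Aⱼ Cⱼ)` of the centered
Gaussians with matrices `Aⱼ`. It is the paper's functional when all matrices are positive definite;
elsewhere it takes the junk values of real powers and of division by zero. -/
def gaussianRatio [Fintype n] [DecidableEq n] [∀ j, DecidableEq (κ j)]
    (C : ∀ j, Matrix (κ j) n ℝ) (p : ι → ℝ) (A : ∀ j, Matrix (κ j) (κ j) ℝ) : ℝ :=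
  (∏ j, (A j).det ^ p j) / (pullbackSum C p A).det

/-- The tuples of matrices with `0 < Aⱼ ≤ Qⱼ`, over which Gaussians compete. -/
def admissible (Q : ∀ j, Matrix (κ j) (κ j) ℝ) : Set (∀ j, Matrix (κ j) (κ j) ℝ) :=
  {A | ∀ j, (A j).PosDef ∧ (Q j - A j).PosSemidef}

/-- The matrix `Bⱼ⁻¹ - Cⱼ M⁻¹ Cⱼᵀ` with `M = ∑ⱼ pⱼ Cⱼᵀ Bⱼ Cⱼ`. Up to the factor `pⱼ` it is the
gradient of `log gaussianRatio` in the `j`-th variable, and at an extremizer it is the Lagrange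
multiplier of the constraint `Bⱼ ≤ Qⱼ`. -/
def multiplier [Fintype n] [DecidableEq n] [∀ j, DecidableEq (κ j)]
    (C : ∀ j, Matrix (κ j) n ℝ) (p : ι → ℝ) (B : ∀ j, Matrix (κ j) (κ j) ℝ) (j : ι) :
    Matrix (κ j) (κ j) ℝ :=
  (B j)⁻¹ - C j * (pullbackSum C p B)⁻¹ * (C j)ᵀ

/-- The Euler–Lagrange (Karush–Kuhn–Tucker) conditions for maximizing `gaussianRatio` over
`admissible Q`: the multipliers are nonnegative and satisfy complementary slackness. -/
def EulerLagrange [Fintype n] [DecidableEq n] [∀ j, DecidableEq (κ j)]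
    (C : ∀ j, Matrix (κ j) n ℝ) (p : ι → ℝ) (Q B : ∀ j, Matrix (κ j) (κ j) ℝ) : Prop :=
  ∀ j, (multiplier C p B j).PosSemidef ∧ multiplier C p B j * (Q j - B j) = 0

/-- The simultaneous congruence `Aⱼ ↦ Tⱼᵀ Aⱼ Tⱼ`, i.e. the action on quadratic forms of a change of
variables `Tⱼ` in each target space. -/
def blockCongr {κ' : ι → Type*} (T : ∀ j, Matrix (κ j) (κ' j) ℝ)
    (A : ∀ j, Matrix (κ j) (κ j) ℝ) : ∀ j, Matrix (κ' j) (κ' j) ℝ :=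
  fun j ↦ (T j)ᵀ * A j * T j

end Definitions

section PullbackSum

variable {ι n : Type*} {κ : ι → Type*} [Fintype ι] [∀ j, Fintype (κ j)]
  {C : ∀ j, Matrix (κ j) n ℝ} {p : ι → ℝ} {A : ∀ j, Matrix (κ j) (κ j) ℝ}

theorem pullbackSum_add_smul (C : ∀ j, Matrix (κ j) n ℝ) (p : ι → ℝ)
    (A H : ∀ j, Matrix (κ j) (κ j) ℝ) (t : ℝ) :
    pullbackSum C p (A + t • H) = pullbackSum C p A + t • pullbackSum C p H := by
  simp only [pullbackSum, Pi.add_apply, Pi.smul_apply, Matrix.mul_add, Matrix.add_mul,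
    Matrix.mul_smul, Matrix.smul_mul, smul_add, Finset.sum_add_distrib, Finset.smul_sum,
    smul_comm t]

theorem isHermitian_pullbackSum (hA : ∀ j, (A j).IsHermitian) :
    (pullbackSum C p A).IsHermitian :=
  isSelfAdjoint_sum _ fun j _ ↦
    (IsSelfAdjoint.all (p j)).smul (isHermitian_conjTranspose_mul_mul (C j) (hA j)).isSelfAdjoint

variable [Fintype n]

theorem dotProduct_pullbackSum_mulVec (C : ∀ j, Matrix (κ j) n ℝ) (p : ι → ℝ)
    (A : ∀ j, Matrix (κ j) (κ j) ℝ) (x : n → ℝ) :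
    x ⬝ᵥ pullbackSum C p A *ᵥ x = ∑ j, p j * (C j *ᵥ x ⬝ᵥ A j *ᵥ C j *ᵥ x) := by
  simp only [pullbackSum, sum_mulVec, dotProduct_sum, smul_mulVec, dotProduct_smul, smul_eq_mul,
    ← mulVec_mulVec, dotProduct_mulVec, vecMul_transpose]

theorem trace_mul_pullbackSum (C : ∀ j, Matrix (κ j) n ℝ) (p : ι → ℝ)
    (A : ∀ j, Matrix (κ j) (κ j) ℝ) (X : Matrix n n ℝ) :
    (X * pullbackSum C p A).trace = ∑ j, p j * (C j * X * (C j)ᵀ * A j).trace := by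
  simp only [pullbackSum, Matrix.mul_sum, trace_sum, Matrix.mul_smul, trace_smul, smul_eq_mul]
  refine Finset.sum_congr rfl fun j _ ↦ ?_
  rw [← Matrix.mul_assoc, trace_mul_comm]
  simp only [Matrix.mul_assoc]

theorem posDef_pullbackSum (hker : ∀ x, (∀ j, C j *ᵥ x = 0) → x = 0) (hp : ∀ j, 0 < p j)
    (hA : ∀ j, (A j).PosDef) : (pullbackSum C p A).PosDef := by
  refine .of_dotProduct_mulVec_pos (isHermitian_pullbackSum fun j ↦ (hA j).isHermitian)
    fun {x} hx ↦ ?_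
  obtain ⟨i, hi⟩ : ∃ i, C i *ᵥ x ≠ 0 := by
    by_contra! h
    exact hx (hker x h)
  rw [star_trivial, dotProduct_pullbackSum_mulVec]
  have hnonneg (j : ι) : 0 ≤ C j *ᵥ x ⬝ᵥ A j *ᵥ C j *ᵥ x :=
    (hA j).posSemidef.dotProduct_mulVec_nonneg _
  exact Finset.sum_pos' (fun j _ ↦ mul_nonneg (hp j).le (hnonneg j))
    ⟨i, Finset.mem_univ i, mul_pos (hp i) ((hA i).dotProduct_mulVec_pos hi)⟩

theorem pullbackSum_mul_mul {l : Type*} {κ' : ι → Type*} [∀ j, Fintype (κ' j)]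
    (C : ∀ j, Matrix (κ j) n ℝ) (p : ι → ℝ) (T : ∀ j, Matrix (κ' j) (κ j) ℝ) (S : Matrix n l ℝ)
    (A : ∀ j, Matrix (κ' j) (κ' j) ℝ) :
    pullbackSum (fun j ↦ T j * C j * S) p A = Sᵀ * pullbackSum C p (blockCongr T A) * S := by
  simp only [pullbackSum, blockCongr, transpose_mul, Matrix.mul_sum, Matrix.sum_mul,
    Matrix.mul_smul, Matrix.smul_mul, Matrix.mul_assoc]

end PullbackSum

section GaussianRatio

variable {ι n : Type*} {κ : ι → Type*} [Fintype ι] [Fintype n] [DecidableEq n]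
  [∀ j, Fintype (κ j)] [∀ j, DecidableEq (κ j)] {C : ∀ j, Matrix (κ j) n ℝ} {p : ι → ℝ}
  {Q A : ∀ j, Matrix (κ j) (κ j) ℝ}

theorem gaussianRatio_pos (hA : ∀ j, 0 < (A j).det) (hN : 0 < (pullbackSum C p A).det) :
    0 < gaussianRatio C p A :=
  div_pos (Finset.prod_pos fun j _ ↦ Real.rpow_pos_of_pos (hA j) _) hN

theorem gaussianRatio_pos_of_mem_admissible (hker : ∀ x, (∀ j, C j *ᵥ x = 0) → x = 0)
    (hp : ∀ j, 0 < p j) (hA : A ∈ admissible Q) : 0 < gaussianRatio C p A :=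
  gaussianRatio_pos (fun j ↦ (hA j).1.det_pos)
    (posDef_pullbackSum hker hp fun j ↦ (hA j).1).det_pos

theorem log_gaussianRatio (hA : ∀ j, 0 < (A j).det) (hN : 0 < (pullbackSum C p A).det) :
    Real.log (gaussianRatio C p A) =
      ∑ j, p j * Real.log (A j).det - Real.log (pullbackSum C p A).det := by
  have hpow (j : ι) : 0 < (A j).det ^ p j := Real.rpow_pos_of_pos (hA j) _
  rw [gaussianRatio, Real.log_div (Finset.prod_pos fun j _ ↦ hpow j).ne' hN.ne',
    Real.log_prod fun j _ ↦ (hpow j).ne']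
  simp only [Real.log_rpow (hA _)]

theorem ofReal_gaussianRatio (hA : ∀ j, 0 < (A j).det) (hN : 0 < (pullbackSum C p A).det) :
    ENNReal.ofReal (gaussianRatio C p A) =
      (∏ j, ENNReal.ofReal (A j).det ^ p j) / ENNReal.ofReal (pullbackSum C p A).det := by
  rw [gaussianRatio, ENNReal.ofReal_div_of_pos hN,
    ENNReal.ofReal_prod_of_nonneg fun j _ ↦ Real.rpow_nonneg (hA j).le _]
  simp only [ENNReal.ofReal_rpow_of_pos (hA _)]

end GaussianRatio

section Covariance

variable {ι n : Type*} {κ : ι → Type*} [∀ j, Fintype (κ j)] [∀ j, DecidableEq (κ j)]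
  {T : ∀ j, Matrix (κ j) (κ j) ℝ}

theorem blockCongr_inv_blockCongr (hT : ∀ j, IsUnit (T j)) (A : ∀ j, Matrix (κ j) (κ j) ℝ) :
    blockCongr T (blockCongr T⁻¹ A) = A := by
  funext j
  have hdet := (isUnit_iff_isUnit_det _).mp (hT j)
  have hdet' : IsUnit (T j)ᵀ.det := by rwa [det_transpose]
  simp only [blockCongr, Pi.inv_apply, transpose_nonsing_inv, mul_assoc, nonsing_inv_mul _ hdet,
    mul_one, mul_nonsing_inv_cancel_left _ _ hdet']

theorem blockCongr_mem_admissible_iff (hT : ∀ j, IsUnit (T j))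
    {Q A : ∀ j, Matrix (κ j) (κ j) ℝ} :
    blockCongr T A ∈ admissible (blockCongr T Q) ↔ A ∈ admissible Q := by
  refine forall_congr' fun j ↦ and_congr ?_ ?_
  · exact (hT j).posDef_star_left_conjugate_iff
  · simp only [blockCongr]
    rw [← sub_mul, ← mul_sub]
    exact (hT j).posSemidef_star_left_conjugate_iff

variable [Fintype ι] [Fintype n] [DecidableEq n] {C : ∀ j, Matrix (κ j) n ℝ} {p : ι → ℝ}
  {S : Matrix n n ℝ}

theorem multiplier_mul_mul (hT : ∀ j, IsUnit (T j)) (hS : IsUnit S)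
    (A : ∀ j, Matrix (κ j) (κ j) ℝ) (j : ι) :
    multiplier (fun j ↦ T j * C j * S) p A j =
      T j * multiplier C p (blockCongr T A) j * (T j)ᵀ := by
  have hT' := (isUnit_iff_isUnit_det _).mp (hT j)
  have hTt : IsUnit (T j)ᵀ.det := by rwa [det_transpose]
  have hS' := (isUnit_iff_isUnit_det _).mp hS
  have hSt : IsUnit Sᵀ.det := by rwa [det_transpose]
  rw [multiplier, pullbackSum_mul_mul]
  simp only [multiplier, blockCongr, Matrix.mul_inv_rev, transpose_mul, Matrix.mul_sub,
    Matrix.sub_mul, Matrix.mul_assoc, mul_nonsing_inv_cancel_left _ _ hT',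
    mul_nonsing_inv_cancel_left _ _ hS', nonsing_inv_mul_cancel_left _ _ hSt,
    nonsing_inv_mul _ hTt, mul_one]

theorem eulerLagrange_mul_mul_iff (hT : ∀ j, IsUnit (T j)) (hS : IsUnit S)
    {Q A : ∀ j, Matrix (κ j) (κ j) ℝ} :
    EulerLagrange (fun j ↦ T j * C j * S) p Q A ↔
      EulerLagrange C p (blockCongr T Q) (blockCongr T A) := by
  refine forall_congr' fun j ↦ ?_
  rw [multiplier_mul_mul hT hS]
  refine and_congr (hT j).posSemidef_star_right_conjugate_iff ?_
  rw [mul_assoc, mul_assoc, (hT j).mul_right_eq_zero, ← (hT j).mul_left_eq_zero]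
  simp only [blockCongr, mul_assoc, mul_sub, sub_mul]

theorem gaussianRatio_blockCongr (hS : IsUnit S) {A : ∀ j, Matrix (κ j) (κ j) ℝ}
    (hA : ∀ j, 0 ≤ (A j).det) :
    gaussianRatio C p (blockCongr T A) =
      (∏ j, ((T j).det ^ 2) ^ p j) * S.det ^ 2 * gaussianRatio (fun j ↦ T j * C j * S) p A := by
  have hS' : S.det ≠ 0 := ((isUnit_iff_isUnit_det _).mp hS).ne_zero
  have hdet (j : ι) : (blockCongr T A j).det ^ p j = ((T j).det ^ 2) ^ p j * (A j).det ^ p j := by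
    rw [← Real.mul_rpow (sq_nonneg _) (hA j), blockCongr, det_mul, det_mul, det_transpose]
    ring_nf
  simp only [gaussianRatio, pullbackSum_mul_mul, det_mul, det_transpose, hdet,
    Finset.prod_mul_distrib]
  field_simp

theorem isMaxOn_gaussianRatio_blockCongr (hT : ∀ j, IsUnit (T j)) (hS : IsUnit S)
    {Q A : ∀ j, Matrix (κ j) (κ j) ℝ} (hA : A ∈ admissible Q)
    (hmax : IsMaxOn (gaussianRatio (fun j ↦ T j * C j * S) p) (admissible Q) A) :
    IsMaxOn (gaussianRatio C p) (admissible (blockCongr T Q)) (blockCongr T A) := by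
  intro X hX
  rw [← blockCongr_inv_blockCongr hT X, blockCongr_mem_admissible_iff hT] at hX
  rw [Set.mem_ofPred_eq, ← blockCongr_inv_blockCongr hT X,
    gaussianRatio_blockCongr hS fun j ↦ (hX j).1.det_pos.le,
    gaussianRatio_blockCongr hS fun j ↦ (hA j).1.det_pos.le]
  exact mul_le_mul_of_nonneg_left (hmax hX) (by positivity)

end Covariance

section Jensen

variable {ι n : Type*} {κ : ι → Type*} [Fintype ι] [Fintype n] [DecidableEq n]
  [∀ j, Fintype (κ j)] [∀ j, DecidableEq (κ j)] {C : ∀ j, Matrix (κ j) n ℝ} {p : ι → ℝ}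
  {A : ∀ j, Matrix (κ j) (κ j) ℝ} {f : ℝ → ℝ} {s : Set ℝ}

theorem dotProduct_pullbackSum_cfc_mulVec_le (hf : ConcaveOn ℝ s f) (hp : ∀ j, 0 ≤ p j)
    (hC : pullbackSum C p 1 = 1) (hA : ∀ j, (A j).IsHermitian) (hs : ∀ j, spectrum ℝ (A j) ⊆ s)
    {x : n → ℝ} (hx : x ⬝ᵥ x = 1) :
    x ⬝ᵥ pullbackSum C p (fun j ↦ cfc f (A j)) *ᵥ x ≤ f (x ⬝ᵥ pullbackSum C p A *ᵥ x) := by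
  let w : (Σ j, κ j) → ℝ := fun k ↦ p k.1 * ((hA k.1).eigenvectorBasis k.2 ⬝ᵥ C k.1 *ᵥ x) ^ 2
  have hw (k) : 0 ≤ w k := mul_nonneg (hp k.1) (sq_nonneg _)
  have hw1 : ∑ k, w k = 1 := by
    have h := dotProduct_pullbackSum_mulVec C p 1 x
    simp only [hC, one_mulVec, hx, Pi.one_apply, ← sum_sq_eigenvectorBasis_dotProduct (hA _)] at h
    rw [Fintype.sum_sigma, h]
    simp only [w, Finset.mul_sum]
  have hmean : ∑ k, w k • (hA k.1).eigenvalues k.2 = x ⬝ᵥ pullbackSum C p A *ᵥ x := by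
    rw [dotProduct_pullbackSum_mulVec, Fintype.sum_sigma]
    simp only [w, ← sum_sq_eigenvectorBasis_dotProduct_mul_eigenvalues (hA _), Finset.mul_sum,
      smul_eq_mul, mul_assoc]
  have hmean_f : ∑ k, w k • f ((hA k.1).eigenvalues k.2) =
      x ⬝ᵥ pullbackSum C p (fun j ↦ cfc f (A j)) *ᵥ x := by
    rw [dotProduct_pullbackSum_mulVec, Fintype.sum_sigma]
    simp only [w, dotProduct_cfc_mulVec (hA _), Finset.mul_sum, smul_eq_mul, mul_assoc]
  rw [← hmean, ← hmean_f]
  exact hf.le_map_sum (fun k _ ↦ hw k) hw1 fun k _ ↦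
    hs k.1 ((hA k.1).eigenvalues_mem_spectrum_real k.2)

theorem trace_pullbackSum_cfc_le (hf : ConcaveOn ℝ s f) (hp : ∀ j, 0 ≤ p j)
    (hC : pullbackSum C p 1 = 1) (hA : ∀ j, (A j).IsHermitian) (hs : ∀ j, spectrum ℝ (A j) ⊆ s) :
    (pullbackSum C p fun j ↦ cfc f (A j)).trace ≤ (cfc f (pullbackSum C p A)).trace := by
  have hN : (pullbackSum C p A).IsHermitian := isHermitian_pullbackSum hA
  rw [trace_cfc hN, ← sum_dotProduct_mulVec_eigenvectorBasis hN]
  refine Finset.sum_le_sum fun i _ ↦ ?_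
  have hunit : hN.eigenvectorBasis i ⬝ᵥ hN.eigenvectorBasis i = 1 := by
    simpa only [EuclideanSpace.inner_eq_star_dotProduct, star_trivial] using
      inner_self_eq_one_of_norm_eq_one (𝕜 := ℝ) (hN.eigenvectorBasis.norm_eq_one i)
  refine (dotProduct_pullbackSum_cfc_mulVec_le hf hp hC hA hs hunit).trans_eq ?_
  simp [hN.eigenvalues_eq i]

end Jensen

section NormalPosition

variable {ι n : Type*} {κ : ι → Type*} [Fintype ι] [Fintype n] [DecidableEq n]
  [∀ j, Fintype (κ j)] [∀ j, DecidableEq (κ j)] {C : ∀ j, Matrix (κ j) n ℝ} {p : ι → ℝ}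
  {Q A : ∀ j, Matrix (κ j) (κ j) ℝ}

theorem multiplier_one (hC : pullbackSum C p 1 = 1) (j : ι) :
    multiplier C p 1 j = 1 - C j * (C j)ᵀ := by
  simp [multiplier, hC]

theorem trace_multiplier_one_mul_cfc_log_nonpos (hEL : EulerLagrange C p Q 1)
    (hA : A ∈ admissible Q) (j : ι) : (multiplier C p 1 j * cfc Real.log (A j)).trace ≤ 0 := by
  obtain ⟨hP, hPQ⟩ := hEL j
  set P := multiplier C p 1 j
  have hlog : 0 ≤ (P * (A j - 1 - cfc Real.log (A j))).trace :=
    trace_mul_nonneg_of_posSemidef hP (cfc_log_le_sub_one (hA j).1)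
  have hslack : 0 ≤ (P * (Q j - A j)).trace := trace_mul_nonneg_of_posSemidef hP (hA j).2
  have hsplit : P * cfc Real.log (A j) =
      P * (Q j - 1) - P * (Q j - A j) - P * (A j - 1 - cfc Real.log (A j)) := by
    noncomm_ring
  rw [hsplit, show P * (Q j - 1) = 0 from hPQ, trace_sub, trace_sub, trace_zero]
  linarith

theorem sum_mul_log_det_eq (hC : pullbackSum C p 1 = 1) (hA : ∀ j, (A j).PosDef) :
    ∑ j, p j * Real.log (A j).det =
      ∑ j, p j * (multiplier C p 1 j * cfc Real.log (A j)).trace +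
        (pullbackSum C p fun j ↦ cfc Real.log (A j)).trace := by
  rw [← one_mul (pullbackSum C p _), trace_mul_pullbackSum, ← Finset.sum_add_distrib]
  refine Finset.sum_congr rfl fun j _ ↦ ?_
  rw [← mul_add, ← trace_add, ← add_mul, multiplier_one hC, Matrix.mul_one, sub_add_cancel, one_mul,
    log_det_eq_trace_cfc_log (hA j)]

theorem eq_zero_of_forall_mulVec_eq_zero (hC : pullbackSum C p 1 = 1) {x : n → ℝ}
    (hx : ∀ j, C j *ᵥ x = 0) : x = 0 := by
  simpa [hC, hx] using dotProduct_pullbackSum_mulVec C p 1 x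

theorem isMaxOn_gaussianRatio_one (hp : ∀ j, 0 < p j) (hC : pullbackSum C p 1 = 1)
    (hEL : EulerLagrange C p Q 1) : IsMaxOn (gaussianRatio C p) (admissible Q) 1 := by
  intro A hA
  have hA' (j : ι) : (A j).PosDef := (hA j).1
  have hN := posDef_pullbackSum (fun _ ↦ eq_zero_of_forall_mulVec_eq_zero hC) hp hA'
  have hJensen : (pullbackSum C p fun j ↦ cfc Real.log (A j)).trace ≤
      Real.log (pullbackSum C p A).det := by
    rw [log_det_eq_trace_cfc_log hN]
    exact trace_pullbackSum_cfc_le strictConcaveOn_log_Ioi.concaveOn (fun j ↦ (hp j).le) hC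
      (fun j ↦ (hA' j).isHermitian) fun j ↦ spectrum_subset_Ioi_of_posDef (hA' j)
  have hslack : ∑ j, p j * (multiplier C p 1 j * cfc Real.log (A j)).trace ≤ 0 :=
    Finset.sum_nonpos fun j _ ↦ mul_nonpos_of_nonneg_of_nonpos (hp j).le
      (trace_multiplier_one_mul_cfc_log_nonpos hEL hA j)
  have hone : gaussianRatio C p 1 = 1 := by simp [gaussianRatio, hC]
  have hdet (j : ι) : 0 < (A j).det := (hA' j).det_pos
  rw [Set.mem_ofPred_eq, hone, ← Real.log_nonpos_iff (gaussianRatio_pos hdet hN.det_pos).le,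
    log_gaussianRatio hdet hN.det_pos, sum_mul_log_det_eq hC hA']
  linarith

end NormalPosition

section Variation

open Filter Topology

variable {ι n : Type*} {κ : ι → Type*} {Q : ∀ j, Matrix (κ j) (κ j) ℝ}

theorem convex_admissible (Q : ∀ j, Matrix (κ j) (κ j) ℝ) : Convex ℝ (admissible Q) := by
  refine convex_iff_forall_pos.mpr fun A hA A' hA' a b ha hb hab j ↦ ⟨?_, ?_⟩
  · exact ((hA j).1.smul ha).add ((hA' j).1.smul hb)
  · have hsplit : Q j - (a • A + b • A') j = a • (Q j - A j) + b • (Q j - A' j) := by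
      rw [smul_sub, smul_sub, sub_add_sub_comm, ← add_smul, hab, one_smul]
      rfl
    rw [hsplit]
    exact ((hA j).2.smul ha.le).add ((hA' j).2.smul hb.le)

variable [Fintype ι] [Fintype n] [DecidableEq n] [∀ j, Fintype (κ j)] [∀ j, DecidableEq (κ j)]
  {C : ∀ j, Matrix (κ j) n ℝ} {p : ι → ℝ} {A B : ∀ j, Matrix (κ j) (κ j) ℝ}

theorem eventually_det_add_smul_pos {A : Matrix n n ℝ} (hA : 0 < A.det) (H : Matrix n n ℝ) :
    ∀ᶠ t : ℝ in 𝓝 0, 0 < (A + t • H).det :=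
  ((by fun_prop : Continuous fun t : ℝ ↦ A + t • H).matrix_det.tendsto 0).eventually_const_lt
    (by simpa using hA)

theorem hasDerivAt_log_gaussianRatio (hB : ∀ j, 0 < (B j).det)
    (hM : 0 < (pullbackSum C p B).det) (H : ∀ j, Matrix (κ j) (κ j) ℝ) :
    HasDerivAt (fun t : ℝ ↦ Real.log (gaussianRatio C p (B + t • H)))
      (∑ j, p j * (multiplier C p B j * H j).trace) 0 := by
  have htrace : ∑ j, p j * (multiplier C p B j * H j).trace =
      ∑ j, p j * ((B j)⁻¹ * H j).trace - ((pullbackSum C p B)⁻¹ * pullbackSum C p H).trace := by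
    simp only [trace_mul_pullbackSum, multiplier, sub_mul, trace_sub, mul_sub,
      Finset.sum_sub_distrib]
  rw [htrace]
  have hderiv := (HasDerivAt.fun_sum (u := Finset.univ) fun j _ ↦
    (hasDerivAt_log_det_add_smul (hB j).ne' (H j)).const_mul (p j)).fun_sub
      (hasDerivAt_log_det_add_smul hM.ne' (pullbackSum C p H))
  refine hderiv.congr_of_eventuallyEq ?_
  filter_upwards [eventually_all.mpr fun j ↦ eventually_det_add_smul_pos (hB j) (H j),
    eventually_det_add_smul_pos hM (pullbackSum C p H)] with t htB htM
  rw [← pullbackSum_add_smul] at htM ⊢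
  exact log_gaussianRatio htB htM

theorem sum_mul_trace_multiplier_mul_sub_nonpos (hker : ∀ x, (∀ j, C j *ᵥ x = 0) → x = 0)
    (hp : ∀ j, 0 < p j) (hB : B ∈ admissible Q)
    (hmax : IsLocalMaxOn (gaussianRatio C p) (admissible Q) B) (hA : A ∈ admissible Q) :
    ∑ j, p j * (multiplier C p B j * (A j - B j)).trace ≤ 0 := by
  have hmax_log : IsLocalMaxOn (fun A ↦ Real.log (gaussianRatio C p A)) (admissible Q) B := by
    filter_upwards [hmax, self_mem_nhdsWithin] with A hAB hA
    exact Real.log_le_log (gaussianRatio_pos_of_mem_admissible hker hp hA) hAB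
  exact nonpos_of_isLocalMaxOn_of_hasDerivWithinAt (convex_admissible Q) hmax_log hB hA
    (hasDerivAt_log_gaussianRatio (fun j ↦ (hB j).1.det_pos)
      (posDef_pullbackSum hker hp fun j ↦ (hB j).1).det_pos (A - B)).hasDerivWithinAt

theorem trace_multiplier_mul_sub_nonpos (hker : ∀ x, (∀ j, C j *ᵥ x = 0) → x = 0)
    (hp : ∀ j, 0 < p j) (hB : B ∈ admissible Q)
    (hmax : IsLocalMaxOn (gaussianRatio C p) (admissible Q) B) {j : ι} {X : Matrix (κ j) (κ j) ℝ}
    (hX : X.PosDef) (hXQ : (Q j - X).PosSemidef) :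
    (multiplier C p B j * (X - B j)).trace ≤ 0 := by
  classical
  have hmem : Function.update B j X ∈ admissible Q := by
    intro i
    obtain rfl | hij := eq_or_ne i j
    · simpa using ⟨hX, hXQ⟩
    · simpa [hij] using hB i
  have hsum := sum_mul_trace_multiplier_mul_sub_nonpos hker hp hB hmax hmem
  rw [Fintype.sum_eq_single j fun i hij ↦ by simp [hij], Function.update_self] at hsum
  exact nonpos_of_mul_nonpos_right hsum (hp j)

theorem isHermitian_multiplier (hB : ∀ j, (B j).IsHermitian) (j : ι) :
    (multiplier C p B j).IsHermitian :=
  (hB j).inv.sub (isHermitian_mul_mul_conjTranspose (C j) (isHermitian_pullbackSum hB).inv)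

theorem eulerLagrange_of_isLocalMaxOn (hker : ∀ x, (∀ j, C j *ᵥ x = 0) → x = 0)
    (hp : ∀ j, 0 < p j) (hB : B ∈ admissible Q)
    (hmax : IsLocalMaxOn (gaussianRatio C p) (admissible Q) B) : EulerLagrange C p Q B := by
  intro j
  have htrace (X : Matrix (κ j) (κ j) ℝ) (hX : X.PosDef) (hXQ : (Q j - X).PosSemidef) :=
    trace_multiplier_mul_sub_nonpos hker hp hB hmax hX hXQ
  have hpos := posSemidef_of_trace_mul_sub_nonpos
    (isHermitian_multiplier (fun i ↦ (hB i).1.isHermitian) j) (hB j).1 (hB j).2 htrace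
  exact ⟨hpos, mul_sub_eq_zero_of_trace_mul_sub_nonpos hpos (hB j).1 (hB j).2 htrace⟩

end Variation

section SquareRoots

variable {ι n : Type*} {κ : ι → Type*} [∀ j, Fintype (κ j)] [∀ j, DecidableEq (κ j)]
  {R Q B : ∀ j, Matrix (κ j) (κ j) ℝ}

theorem blockCongr_one_of_mul_self_eq (hR : ∀ j, (R j).IsHermitian)
    (hRB : ∀ j, R j * R j = B j) : blockCongr R 1 = B := by
  funext j
  rw [blockCongr, Pi.one_apply, mul_one, (isHermitian_iff_isSymm.mp (hR j)).eq, hRB]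

theorem blockCongr_inv_mul_mul_inv (hR : ∀ j, (R j).PosDef) (Q : ∀ j, Matrix (κ j) (κ j) ℝ) :
    blockCongr R (fun j ↦ (R j)⁻¹ * Q j * (R j)⁻¹) = Q := by
  funext j
  have hdet : IsUnit (R j).det := (hR j).det_pos.ne'.isUnit
  rw [blockCongr, (isHermitian_iff_isSymm.mp (hR j).isHermitian).eq]
  simp only [mul_assoc, nonsing_inv_mul _ hdet, mul_one, mul_nonsing_inv_cancel_left _ _ hdet]

theorem one_mem_admissible_root_iff (hR : ∀ j, (R j).PosDef) (hRB : ∀ j, R j * R j = B j) :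
    1 ∈ admissible (fun j ↦ (R j)⁻¹ * Q j * (R j)⁻¹) ↔ B ∈ admissible Q := by
  rw [← blockCongr_mem_admissible_iff fun j ↦ (hR j).isUnit, blockCongr_inv_mul_mul_inv hR,
    blockCongr_one_of_mul_self_eq (fun j ↦ (hR j).isHermitian) hRB]

variable [Fintype ι] [Fintype n] [DecidableEq n] {C : ∀ j, Matrix (κ j) n ℝ} {p : ι → ℝ}
  {S : Matrix n n ℝ}

theorem pullbackSum_root_one (hR : ∀ j, (R j).IsHermitian) (hRB : ∀ j, R j * R j = B j)
    (hM : IsUnit (pullbackSum C p B)) (hS : S.IsHermitian)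
    (hSM : S * S = (pullbackSum C p B)⁻¹) : pullbackSum (fun j ↦ R j * C j * S) p 1 = 1 := by
  rw [pullbackSum_mul_mul, blockCongr_one_of_mul_self_eq hR hRB,
    (isHermitian_iff_isSymm.mp hS).eq, mul_assoc, mul_eq_one_comm, mul_assoc, hSM,
    mul_nonsing_inv _ ((isUnit_iff_isUnit_det _).mp hM)]

theorem eulerLagrange_root_iff (hR : ∀ j, (R j).PosDef) (hRB : ∀ j, R j * R j = B j)
    (hS : S.PosDef) :
    EulerLagrange (fun j ↦ R j * C j * S) p (fun j ↦ (R j)⁻¹ * Q j * (R j)⁻¹) 1 ↔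
      EulerLagrange C p Q B := by
  rw [eulerLagrange_mul_mul_iff (fun j ↦ (hR j).isUnit) hS.isUnit,
    blockCongr_inv_mul_mul_inv hR, blockCongr_one_of_mul_self_eq (fun j ↦ (hR j).isHermitian) hRB]

theorem isMaxOn_gaussianRatio_of_eulerLagrange (hp : ∀ j, 0 < p j)
    (hM : (pullbackSum C p B).PosDef) (hB : B ∈ admissible Q) (hEL : EulerLagrange C p Q B) :
    IsMaxOn (gaussianRatio C p) (admissible Q) B := by
  choose R hR hRB using fun j ↦ exists_posDef_mul_self_eq (hB j).1
  obtain ⟨S, hS, hSM⟩ := exists_posDef_mul_self_eq hM.inv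
  have hR' (j : ι) : (R j).IsHermitian := (hR j).isHermitian
  have hmax := isMaxOn_gaussianRatio_one hp
    (pullbackSum_root_one hR' hRB hM.isUnit hS.isHermitian hSM)
    ((eulerLagrange_root_iff hR hRB hS).mpr hEL)
  have hmax_congr := isMaxOn_gaussianRatio_blockCongr (fun j ↦ (hR j).isUnit) hS.isUnit
    ((one_mem_admissible_root_iff hR hRB).mpr hB) hmax
  rwa [blockCongr_inv_mul_mul_inv hR, blockCongr_one_of_mul_self_eq hR' hRB]
    at hmax_congr

end SquareRoots

section GeometricData

variable {n m : ℕ} {κ : Fin m → ℕ} {C : ∀ j, Matrix (Fin (κ j)) (Fin n) ℝ} {p : Fin m → ℝ}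
  {Q B R : ∀ j, Matrix (Fin (κ j)) (Fin (κ j)) ℝ} {S : Matrix (Fin n) (Fin n) ℝ}

theorem geometricDatum_iff :
    GeometricDatum C p Q ↔
      1 ∈ admissible Q ∧ EulerLagrange C p Q 1 ∧ pullbackSum C p 1 = 1 := by
  have hone : pullbackSum C p 1 = ∑ j, p j • ((C j)ᵀ * C j) := by simp [pullbackSum]
  constructor
  · rintro ⟨hCC, hQ, hslack, hC⟩
    rw [← hone] at hC
    refine ⟨fun j ↦ ⟨.one, hQ j⟩, fun j ↦ ?_, hC⟩
    rw [multiplier_one hC]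
    exact ⟨hCC j, hslack j⟩
  · rintro ⟨hQ, hEL, hC⟩
    simp only [EulerLagrange, multiplier_one hC] at hEL
    exact ⟨fun j ↦ (hEL j).1, fun j ↦ (hQ j).2, fun j ↦ (hEL j).2, hone ▸ hC⟩

theorem geometricDatum_root_iff (hR : ∀ j, (R j).PosDef) (hRB : ∀ j, R j * R j = B j)
    (hM : IsUnit (pullbackSum C p B)) (hS : S.PosDef) (hSM : S * S = (pullbackSum C p B)⁻¹)
    (hB : B ∈ admissible Q) :
    GeometricDatum (fun j ↦ R j * C j * S) p (fun j ↦ (R j)⁻¹ * Q j * (R j)⁻¹) ↔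
      EulerLagrange C p Q B := by
  rw [geometricDatum_iff, one_mem_admissible_root_iff hR hRB, eulerLagrange_root_iff hR hRB hS]
  exact ⟨fun h ↦ h.2.1, fun h ↦
    ⟨hB, h, pullbackSum_root_one (fun j ↦ (hR j).isHermitian) hRB hM hS.isHermitian hSM⟩⟩

theorem exists_geometricDatum_root_iff (hM : (pullbackSum C p B).PosDef) (hB : B ∈ admissible Q) :
    (∃ (R : ∀ j, Matrix (Fin (κ j)) (Fin (κ j)) ℝ) (S : Matrix (Fin n) (Fin n) ℝ),
      (∀ j, (R j).PosDef ∧ R j * R j = B j) ∧ S.PosDef ∧ S * S = (pullbackSum C p B)⁻¹ ∧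
        GeometricDatum (fun j ↦ R j * C j * S) p (fun j ↦ (R j)⁻¹ * Q j * (R j)⁻¹)) ↔
      EulerLagrange C p Q B := by
  constructor
  · rintro ⟨R, S, hR, hS, hSM, hgeom⟩
    exact (geometricDatum_root_iff (fun j ↦ (hR j).1) (fun j ↦ (hR j).2) hM.isUnit hS hSM hB).mp
      hgeom
  · intro hEL
    choose R hR hRB using fun j ↦ exists_posDef_mul_self_eq (hB j).1
    obtain ⟨S, hS, hSM⟩ := exists_posDef_mul_self_eq hM.inv
    exact ⟨R, S, fun j ↦ ⟨hR j, hRB j⟩, hS, hSM,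
      (geometricDatum_root_iff hR hRB hM.isUnit hS hSM hB).mpr hEL⟩

end GeometricData

section RegularizedConstant

variable {n m : ℕ} {κ : Fin m → ℕ} {C : ∀ j, Matrix (Fin (κ j)) (Fin n) ℝ} {p : Fin m → ℝ}
  {Q B : ∀ j, Matrix (Fin (κ j)) (Fin (κ j)) ℝ}

theorem BLconst_sq (hker : ∀ x, (∀ j, C j *ᵥ x = 0) → x = 0) (hp : ∀ j, 0 < p j) :
    BLconst C p Q ^ 2 = ⨆ A ∈ admissible Q, ENNReal.ofReal (gaussianRatio C p A) := by
  rw [BLconst, ← ENNReal.rpow_natCast]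
  refine ((ENNReal.orderIsoRpow (2 : ℕ) (by norm_num)).map_iSup₂ _).trans
    (biSup_congr fun A hA ↦ ?_)
  rw [ofReal_gaussianRatio (fun j ↦ (hA j).1.det_pos)
    (posDef_pullbackSum hker hp fun j ↦ (hA j).1).det_pos, ENNReal.orderIsoRpow_apply,
    ← ENNReal.rpow_mul]
  norm_num [pullbackSum]

theorem BLconst_sq_eq_ofReal_iff (hker : ∀ x, (∀ j, C j *ᵥ x = 0) → x = 0) (hp : ∀ j, 0 < p j)
    (hB : B ∈ admissible Q) :
    BLconst C p Q ^ 2 = ENNReal.ofReal (gaussianRatio C p B) ↔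
      IsMaxOn (gaussianRatio C p) (admissible Q) B := by
  have hBpos := (gaussianRatio_pos_of_mem_admissible hker hp hB).le
  rw [BLconst_sq hker hp, (le_iSup₂_of_le B hB le_rfl).ge_iff_eq'.symm, iSup₂_le_iff]
  exact forall₂_congr fun A _ ↦ ENNReal.ofReal_le_ofReal_iff hBpos

end RegularizedConstant

end BrascampLieb

open BrascampLieb in
theorem gaussian_extremizer_characterization_general {n m : ℕ} {ni : Fin m → ℕ}
    (C : ∀ j, Matrix (Fin (ni j)) (Fin n) ℝ) (hker : ∀ x, (∀ j, C j *ᵥ x = 0) → x = 0)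
    (p : Fin m → ℝ) (hp : ∀ j, 0 < p j) (Q B : ∀ j, Matrix (Fin (ni j)) (Fin (ni j)) ℝ)
    (hB : B ∈ admissible Q) :
    (pullbackSum C p B).PosDef ∧
      [BLconst C p Q ^ 2 =
        (∏ j, ENNReal.ofReal (B j).det ^ p j) / ENNReal.ofReal (pullbackSum C p B).det,
      IsLocalMaxOn (gaussianRatio C p) (admissible Q) B,
      EulerLagrange C p Q B,
      ∃ (R : ∀ j, Matrix (Fin (ni j)) (Fin (ni j)) ℝ) (S : Matrix (Fin n) (Fin n) ℝ),
        (∀ j, (R j).PosDef ∧ R j * R j = B j) ∧ S.PosDef ∧ S * S = (pullbackSum C p B)⁻¹ ∧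
          GeometricDatum (fun j ↦ R j * C j * S) p (fun j ↦ (R j)⁻¹ * Q j * (R j)⁻¹)].TFAE := by
  have hM : (pullbackSum C p B).PosDef := posDef_pullbackSum hker hp fun j ↦ (hB j).1
  refine ⟨hM, ?_⟩
  rw [← ofReal_gaussianRatio (fun j ↦ (hB j).1.det_pos) hM.det_pos]
  tfae_have 1 → 2 := fun h ↦ ((BLconst_sq_eq_ofReal_iff hker hp hB).mp h).localize
  tfae_have 2 → 3 := eulerLagrange_of_isLocalMaxOn hker hp hB
  tfae_have 3 → 1 := fun h ↦ (BLconst_sq_eq_ofReal_iff hker hp hB).mpr <|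
    isMaxOn_gaussianRatio_of_eulerLagrange hp hM hB h
  tfae_have 4 ↔ 3 := exists_geometricDatum_root_iff hM hB
  tfae_finish

/-- Characterization of the Gaussian extremizers of a regularized Brascamp–Lieb
datum: global extremizers, local extremizers, the Euler–Lagrange equations, and
equivalence to a generalized geometric datum all coincide. -/
theorem gaussian_extremizer_characterization
    {n m : ℕ} (hm : 1 ≤ m) {ni : Fin m → ℕ}
    (C : ∀ j, Matrix (Fin (ni j)) (Fin n) ℝ)
    (hCsurj : ∀ j, Function.Surjective (C j).mulVec)
    (hker : ∀ x : Fin n → ℝ, (∀ j, (C j).mulVec x = 0) → x = 0)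
    (p : Fin m → ℝ) (hp : ∀ j, 0 < p j)
    (Q : ∀ j, Matrix (Fin (ni j)) (Fin (ni j)) ℝ) (hQ : ∀ j, (Q j).PosDef)
    (B : ∀ j, Matrix (Fin (ni j)) (Fin (ni j)) ℝ)
    (hB : ∀ j, (B j).PosDef ∧ (Q j - B j).PosSemidef)
    (M : Matrix (Fin n) (Fin n) ℝ)
    (hM : M = ∑ j, p j • ((C j)ᵀ * B j * C j)) :
    M.PosDef ∧
    -- (a) ↔ (b)
    ((BLconst C p Q ^ (2 : ℕ) =
        (∏ j, ENNReal.ofReal ((B j).det) ^ p j) / ENNReal.ofReal M.det) ↔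
      IsLocalMaxOn
        (fun A : ∀ j, Matrix (Fin (ni j)) (Fin (ni j)) ℝ =>
          (∏ j, (A j).det ^ p j) / (∑ j, p j • ((C j)ᵀ * A j * C j)).det)
        {A | ∀ j, (A j).PosDef ∧ (Q j - A j).PosSemidef} B) ∧
    -- (a) ↔ (c)
    ((BLconst C p Q ^ (2 : ℕ) =
        (∏ j, ENNReal.ofReal ((B j).det) ^ p j) / ENNReal.ofReal M.det) ↔
      ∀ j, ((B j)⁻¹ - C j * M⁻¹ * (C j)ᵀ).PosSemidef ∧
        ((B j)⁻¹ - C j * M⁻¹ * (C j)ᵀ) * (Q j - B j) = 0) ∧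
    -- (a) ↔ (d)
    ((BLconst C p Q ^ (2 : ℕ) =
        (∏ j, ENNReal.ofReal ((B j).det) ^ p j) / ENNReal.ofReal M.det) ↔
      ∃ (Bh : ∀ j, Matrix (Fin (ni j)) (Fin (ni j)) ℝ) (Mh : Matrix (Fin n) (Fin n) ℝ),
        (∀ j, (Bh j).PosDef ∧ Bh j * Bh j = B j) ∧ Mh.PosDef ∧ Mh * Mh = M⁻¹ ∧
          GeometricDatum (fun j => Bh j * C j * Mh) p
            (fun j => (Bh j)⁻¹ * Q j * (Bh j)⁻¹)) := by
  subst hM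
  obtain ⟨hM, h⟩ := gaussian_extremizer_characterization_general C hker p hp Q B hB
  exact ⟨hM, h.out 0 1, h.out 0 2, h.out 0 3⟩
end
end

section
/- Let (C,p,Q) be a generalized geometric Brascamp–Lieb datum and set K = ⋂_{j=1}^m ( ker C_j + ker(I_n − C_jᵀ C_j) ) ⊆ ℝⁿ. If V ⊆ K is a subspace with C_iᵀ C_i V ⊆ V for all 1 ≤ i ≤ m, then V is critical: dim V = ∑_{i=1}^m p_i dim(C_i V). -/
open MeasureTheory Matrix Module
open scoped ENNReal

noncomputable section

/-!
On `K` each `Cᵢ` satisfies `Cᵢ Cᵢᵀ Cᵢ = Cᵢ`, so on an invariant `V ⊆ K` the map `Cᵢ : V → Cᵢ V` has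
`Cᵢᵀ` as a right inverse. By cyclicity, the trace of `Cᵢᵀ Cᵢ` on `V` equals the trace of the
identity of `Cᵢ V`, that is `dim (Cᵢ V)`. Taking traces on `V` in `∑ pᵢ Cᵢᵀ Cᵢ = 1` gives the claim.
-/

theorem mulVecLin_sub {R m n : Type*} [CommRing R] [Fintype n] (M N : Matrix m n R) :
    (M - N).mulVecLin = M.mulVecLin - N.mulVecLin :=
  LinearMap.ext fun v => sub_mulVec M N v

section

variable {R E F : Type*}

theorem mem_ker_sup_ker_id_sub_comp_iff [Ring R] [AddCommGroup E] [Module R E] [AddCommGroup F]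
    [Module R F] (A : E →ₗ[R] F) (B : F →ₗ[R] E) {v : E} :
    v ∈ LinearMap.ker A ⊔ LinearMap.ker (LinearMap.id - B ∘ₗ A) ↔ A (B (A v)) = A v := by
  simp only [Submodule.mem_sup, LinearMap.mem_ker, LinearMap.sub_apply, LinearMap.id_apply,
    LinearMap.comp_apply, sub_eq_zero]
  constructor
  · rintro ⟨a, ha, b, hb, rfl⟩
    rw [map_add, ha, zero_add, ← hb]
  · intro hv
    exact ⟨v - B (A v), by rw [map_sub, hv, sub_self], B (A v), by rw [hv], sub_add_cancel _ _⟩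

variable [CommRing R] [AddCommGroup E] [Module R E] [AddCommGroup F] [Module R F]

theorem trace_comp_eq_finrank_of_comp_eq_id [Module.Free R E] [Module.Finite R E]
    [Module.Free R F] [Module.Finite R F] {f : E →ₗ[R] F} {g : F →ₗ[R] E}
    (hfg : f ∘ₗ g = LinearMap.id) :
    LinearMap.trace R E (g ∘ₗ f) = (finrank R F : R) := by
  rw [LinearMap.trace_comp_comm', hfg, LinearMap.trace_id]

theorem trace_restrict_comp_eq_finrank_map (A : E →ₗ[R] F) (B : F →ₗ[R] E) {V : Submodule R E}
    [Module.Free R V] [Module.Finite R V] [Module.Free R (V.map A)]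
    (hinv : ∀ v ∈ V, (B ∘ₗ A) v ∈ V) (hABA : ∀ v ∈ V, A (B (A v)) = A v) :
    LinearMap.trace R V ((B ∘ₗ A).restrict hinv) = (finrank R (V.map A) : R) := by
  have hB : ∀ w ∈ V.map A, B w ∈ V := by
    rintro _ ⟨v, hv, rfl⟩
    exact hinv v hv
  have hright : A.submoduleMap V ∘ₗ B.restrict hB = LinearMap.id := by
    ext ⟨_, v, hv, rfl⟩
    exact hABA v hv
  exact trace_comp_eq_finrank_of_comp_eq_id hright

theorem critical_of_invariant_subspace_of_K_general {ι : Type*} [Fintype ι] {G : ι → Type*}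
    [∀ i, AddCommGroup (G i)] [∀ i, Module R (G i)]
    (A : ∀ i, E →ₗ[R] G i) (B : ∀ i, G i →ₗ[R] E) (p : ι → R) (V : Submodule R E)
    [Module.Free R V] [Module.Finite R V] [∀ i, Module.Free R (V.map (A i))]
    (hsum : ∀ v ∈ V, ∑ i, p i • B i (A i v) = v)
    (hVK : V ≤ ⨅ i, (LinearMap.ker (A i) ⊔ LinearMap.ker (LinearMap.id - B i ∘ₗ A i)))
    (hinv : ∀ i, V.map (B i ∘ₗ A i) ≤ V) :
    (finrank R V : R) = ∑ i, p i * (finrank R (V.map (A i)) : R) := by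
  have hinv' (i : ι) : ∀ v ∈ V, (B i ∘ₗ A i) v ∈ V := Submodule.map_le_iff_le_comap.1 (hinv i)
  have hABA (i : ι) (v : E) (hv : v ∈ V) : A i (B i (A i v)) = A i v :=
    (mem_ker_sup_ker_id_sub_comp_iff _ _).1 (Submodule.mem_iInf _ |>.1 (hVK hv) i)
  have hid : LinearMap.id = ∑ i, p i • (B i ∘ₗ A i).restrict (hinv' i) := by
    ext v
    simp [hsum v v.2]
  calc (finrank R V : R) = LinearMap.trace R V LinearMap.id := (LinearMap.trace_id R V).symm
    _ = ∑ i, p i * LinearMap.trace R V ((B i ∘ₗ A i).restrict (hinv' i)) := by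
      simp only [hid, map_sum, map_smul, smul_eq_mul]
    _ = ∑ i, p i * (finrank R (V.map (A i)) : R) := by
      simp only [trace_restrict_comp_eq_finrank_map _ _ (hinv' _) (hABA _)]

end

/-- For a generalized geometric Brascamp–Lieb datum, any subspace of
`K = ⋂ⱼ (ker Cⱼ + ker(I − Cⱼᵀ Cⱼ))` invariant under all `Cᵢᵀ Cᵢ` is critical. -/
theorem critical_of_invariant_subspace_of_K
    {n m : ℕ} (hm : 1 ≤ m) {ni : Fin m → ℕ}
    (C : ∀ j, Matrix (Fin (ni j)) (Fin n) ℝ)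
    (hCsurj : ∀ j, Function.Surjective (C j).mulVec)
    (hker : ∀ x : Fin n → ℝ, (∀ j, (C j).mulVec x = 0) → x = 0)
    (p : Fin m → ℝ) (hp : ∀ j, 0 < p j)
    (Q : ∀ j, Matrix (Fin (ni j)) (Fin (ni j)) ℝ) (hQ : ∀ j, (Q j).PosDef)
    (hgeo : GeometricDatum C p Q)
    (V : Submodule ℝ (Fin n → ℝ))
    (hVK : V ≤ ⨅ j, (LinearMap.ker (C j).mulVecLin ⊔
      LinearMap.ker ((1 - (C j)ᵀ * C j : Matrix (Fin n) (Fin n) ℝ)).mulVecLin))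
    (hinv : ∀ i, V.map (((C i)ᵀ * C i : Matrix (Fin n) (Fin n) ℝ)).mulVecLin ≤ V) :
    (finrank ℝ V : ℝ) = ∑ i, p i * (finrank ℝ (V.map (C i).mulVecLin) : ℝ) := by
  refine critical_of_invariant_subspace_of_K_general (fun i => (C i).mulVecLin)
    (fun i => (C i)ᵀ.mulVecLin) p V (fun v _ => ?_) ?_ ?_
  · simpa only [sum_mulVec, smul_mulVec, one_mulVec, mulVecLin_apply, mulVec_mulVec] using
      congrArg (· *ᵥ v) hgeo.2.2.2
  · simpa only [mulVecLin_sub, mulVecLin_one, mulVecLin_mul] using hVK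
  · simpa only [mulVecLin_mul] using hinv
end
end
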